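/- arXiv:1805.11173 — 2 statements merged into one kernel-verified Lean document; each statement's English description precedes it below -/
import Mathlib

section
/- Let B ⊆ A be a non-degenerate C*-inclusion and J a proper closed two-sided ideal of A. The following are equivalent: (i) J is dominant relative to B, i.e. every proper closed two-sided ideal L of A with B ∩ L ⊆ B ∩ J satisfies L ⊆ J; (ii) there exists a set Φ of states of B vanishing on B ∩ J such that every A-lift Σ of Φ is subordinated to J; (iii) there exists a set Φ of pure states of B vanishing on B ∩ J such that every A-lift Σ of Φ is subordinated to J; (iii') there exists a set Φ of pure states of B vanishing on B ∩ J such that every pure A-lift Σ of Φ is subordinated to J. -/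
open scoped ComplexOrder

/-- A state: a positive linear functional of norm one. -/
def IsState {E : Type*} [SeminormedAddCommGroup E] [NormedSpace ℂ E] [Mul E] [Star E]
    (φ : E →L[ℂ] ℂ) : Prop :=
  (∀ a : E, 0 ≤ φ (star a * a)) ∧ ‖φ‖ = 1

/-- A pure state: an extreme point of the set of states. -/
def IsPureState {E : Type*} [SeminormedAddCommGroup E] [NormedSpace ℂ E] [Mul E] [Star E]
    (φ : E →L[ℂ] ℂ) : Prop :=
  φ ∈ Set.extremePoints ℝ {ψ : E →L[ℂ] ℂ | IsState ψ}

/-- `K_ψ = {a | ψ (x * a * y) = 0 for all x, y}`. -/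
def Kset {E F : Type*} [Mul E] [Zero F] (ψ : E → F) : Set E :=
  {a | ∀ x y : E, ψ (x * a * y) = 0}

/-- Non-degeneracy of the inclusion `Bs ⊆ A`. -/
def NondegSet {A : Type*} [NonUnitalCStarAlgebra A] (Bs : Set A) : Prop :=
  closure (Submodule.span ℂ {x : A | ∃ b ∈ Bs, ∃ a : A, x = b * a} : Set A) = Set.univ

/-!
A state of `B` vanishing on `B ∩ L` is contractive for the norm of `A / L`, because `B / (B ∩ L)`
embeds isometrically into `A / L`. By Hahn-Banach it extends to a contractive functional on `A`
vanishing on `L`, and such an extension is a state. The state extensions vanishing on `L` of a pure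
state form a weak-* closed face of the state space, so by Krein-Milman one of them is pure. If all
lifts of `Φ` are subordinated to `J` and `B ∩ L ⊆ J`, these lifts show `L ⊆ ⋂ K_σ ⊆ J`.

Conversely, let `Φ` consist of all pure states of `B` vanishing on `B ∩ J`. For `0 ≤ x ∈ B` with
`x ∉ J`, the functionals `ψ` with `‖ψ‖ ≤ 1`, `ψ = 0` on `B ∩ J` and `ψ x = dist (x, B ∩ J)` are
states and form a nonempty weak-* closed face, so some member of `Φ` is nonzero at `x`. Hence for
every lift of `Φ` the ideal `⋂ K_σ` meets `B` inside `J`, and dominance puts it inside `J`.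
-/

section

attribute [local instance] CStarAlgebra.spectralOrder CStarAlgebra.spectralOrderedRing

/-! ### Functional calculus modulo a closed ideal -/

lemma norm_sub_mul_cfcₙ_star_mul_self_sq_le {E : Type*} [NonUnitalCStarAlgebra E] (s : E)
    {f : ℝ → ℝ} (hf : Continuous f) (hf0 : f 0 = 0) {c : ℝ} (hfc : ∀ t, |t * (1 - f t) ^ 2| ≤ c) :
    ‖s - s * cfcₙ f (star s * s)‖ ^ 2 ≤ c := by
  set x := star s * s with hx
  have hxsa : IsSelfAdjoint x := .star_mul_self s
  have he : star (cfcₙ f x) = cfcₙ f x := (cfcₙ_predicate f x : IsSelfAdjoint _)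
  have hid : ContinuousOn (fun t : ℝ ↦ t) (quasispectrum ℝ x) := continuousOn_id
  have hfx := hf.continuousOn (s := quasispectrum ℝ x)
  have hfid : ContinuousOn (fun t ↦ f t * t) (quasispectrum ℝ x) := hfx.mul hid
  have hg : ContinuousOn (fun t ↦ t - f t * t) (quasispectrum ℝ x) := hid.sub hfid
  have hgf : ContinuousOn (fun t ↦ (t - f t * t) * f t) (quasispectrum ℝ x) := hg.mul hfx
  have hcalc : star (s - s * cfcₙ f x) * (s - s * cfcₙ f x)
      = cfcₙ (fun t ↦ (t - f t * t) - (t - f t * t) * f t) x := by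
    rw [cfcₙ_sub (hf := hg) (hg := hgf) (hf0 := by simp) (hg0 := by simp),
      cfcₙ_mul (hf := hg) (hg := hfx) (hf0 := by simp) (hg0 := hf0),
      cfcₙ_sub (hf := hid) (hg := hfid) (hf0 := by simp) (hg0 := by simp),
      cfcₙ_mul (hf := hfx) (hg := hid) (hf0 := hf0) (hg0 := by simp), cfcₙ_id' ℝ x,
      star_sub, star_mul, he, hx]
    noncomm_ring
  rw [sq, ← CStarRing.norm_star_mul_self, hcalc]
  refine norm_cfcₙ_le fun t _ ↦ (hfc t).trans' (le_of_eq ?_)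
  rw [Real.norm_eq_abs]
  ring_nf

namespace ClosedIdeal

variable {E : Type*} [NonUnitalCStarAlgebra E] {L : TwoSidedIdeal E}

lemma smul_mem (hL : IsClosed (L : Set E)) (c : ℂ) {l : E} (hl : l ∈ L) : c • l ∈ L := by
  have hunit := CStarAlgebra.increasingApproximateUnit E
  refine hL.mem_of_tendsto ((hunit.tendsto_mul_left l).const_smul c) (.of_forall fun e ↦ ?_)
  rw [← mul_smul_comm]
  exact L.mul_mem_right _ _ hl

/-- The star subalgebra of `E × E` of pairs whose components, and the adjoints of whose
components, are congruent modulo `L`. It transports functional calculus through congruences. -/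
def congruentPairs (hL : IsClosed (L : Set E)) : NonUnitalStarSubalgebra ℂ (E × E) where
  carrier := {p | p.1 - p.2 ∈ L ∧ star p.1 - star p.2 ∈ L}
  zero_mem' := by simp [L.zero_mem]
  add_mem' {p q} hp hq := by
    constructor
    · simpa only [Prod.fst_add, Prod.snd_add, add_sub_add_comm] using L.add_mem hp.1 hq.1
    · simpa only [Prod.fst_add, Prod.snd_add, star_add, add_sub_add_comm]
        using L.add_mem hp.2 hq.2
  mul_mem' {p q} hp hq := by
    have mul_sub_mul_mem {a b c d : E} (hab : a - b ∈ L) (hcd : c - d ∈ L) :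
        a * c - b * d ∈ L := by
      have := L.add_mem (L.mul_mem_left a _ hcd) (L.mul_mem_right _ d hab)
      rwa [mul_sub, sub_mul, sub_add_sub_cancel] at this
    exact ⟨mul_sub_mul_mem hp.1 hq.1, by simpa using mul_sub_mul_mem hq.2 hp.2⟩
  smul_mem' c p hp := by
    constructor
    · simpa only [Prod.smul_fst, Prod.smul_snd, smul_sub] using smul_mem hL c hp.1
    · simpa only [Prod.smul_fst, Prod.smul_snd, star_smul, smul_sub]
        using smul_mem hL (star c) hp.2
  star_mem' {p} hp := by simpa using hp.symm

lemma isClosed_congruentPairs (hL : IsClosed (L : Set E)) :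
    IsClosed (congruentPairs hL : Set (E × E)) :=
  (hL.preimage (by fun_prop : Continuous fun p : E × E ↦ p.1 - p.2)).inter
    (hL.preimage (by fun_prop : Continuous fun p : E × E ↦ star p.1 - star p.2))

lemma cfcₙ_sub_cfcₙ_mem (hL : IsClosed (L : Set E)) {x y : E} (hx : IsSelfAdjoint x)
    (hy : IsSelfAdjoint y) (hxy : x - y ∈ L) {f : ℝ → ℝ} (hf : Continuous f) :
    cfcₙ f x - cfcₙ f y ∈ L := by
  have hxy' : IsSelfAdjoint (x, y) := Prod.ext hx.star_eq hy.star_eq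
  have hpair : (x, y) ∈ congruentPairs hL := ⟨hxy, by simpa [hx.star_eq, hy.star_eq] using hxy⟩
  have := isClosed_congruentPairs hL
  have hmem : cfcₙ f (x, y) ∈ congruentPairs hL := cfcₙ_mem f hpair
  rw [cfcₙ_map_prod (S := ℂ) f x y hf.continuousOn] at hmem
  exact hmem.1

lemma cfcₙ_mem (hL : IsClosed (L : Set E)) {x : E} (hx : IsSelfAdjoint x) (hxL : x ∈ L)
    {f : ℝ → ℝ} (hf : Continuous f) : cfcₙ f x ∈ L := by
  simpa using cfcₙ_sub_cfcₙ_mem hL hx (.zero E) (by simpa using hxL) hf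

lemma mem_of_star_mul_self_mem (hL : IsClosed (L : Set E)) {s : E} (hs : star s * s ∈ L) :
    s ∈ L := by
  rw [← SetLike.mem_coe, ← hL.closure_eq, Metric.mem_closure_iff]
  intro ε hε
  obtain ⟨δ, hδ, hδε⟩ : ∃ δ : ℝ, 0 < δ ∧ δ < ε ^ 2 := exists_between (by positivity)
  have hpos (t : ℝ) : 0 < δ + |t| := by positivity
  let f : ℝ → ℝ := fun t ↦ |t| / (δ + |t|)
  have hf : Continuous f := by fun_prop (disch := exact fun t ↦ (hpos t).ne')
  have hfδ (t : ℝ) : |t * (1 - f t) ^ 2| ≤ δ := by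
    have h_one_sub : 1 - f t = δ / (δ + |t|) := by
      rw [eq_div_iff (hpos t).ne', sub_mul, div_mul_cancel₀ _ (hpos t).ne', one_mul,
        add_sub_cancel_right]
    rw [abs_mul, abs_pow, h_one_sub, abs_of_pos (div_pos hδ (hpos t)), div_pow, ← mul_div_assoc,
      div_le_iff₀ (pow_pos (hpos t) 2)]
    nlinarith [mul_nonneg hδ.le (sq_nonneg |t|), mul_nonneg (sq_nonneg δ) (abs_nonneg t),
      pow_pos hδ 3]
  -- `s * f (s⋆s)` lies in `L`, and converges to `s` as `δ` tends to `0`.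
  refine ⟨s * cfcₙ f (star s * s),
    L.mul_mem_left _ _ (cfcₙ_mem hL (.star_mul_self s) hs hf), ?_⟩
  rw [dist_eq_norm]
  refine lt_of_pow_lt_pow_left₀ 2 hε.le (hδε.trans_le' ?_)
  exact norm_sub_mul_cfcₙ_star_mul_self_sq_le s hf (by simp [f]) hfδ

lemma star_mem (hL : IsClosed (L : Set E)) {l : E} (hl : l ∈ L) : star l ∈ L :=
  mem_of_star_mul_self_mem hL (by simpa using L.mul_mem_right _ _ hl)

/-- A closed two-sided ideal as a complex subspace. -/
def toSubmodule (hL : IsClosed (L : Set E)) : Submodule ℂ E where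
  carrier := L
  zero_mem' := L.zero_mem
  add_mem' := L.add_mem
  smul_mem' c _ := smul_mem hL c

lemma exists_mem_elemental_nonneg_norm_le (hL : IsClosed (L : Set E)) {x y : E} (hx : 0 ≤ x)
    (hy : IsSelfAdjoint y) (hxy : x - y ∈ L) :
    ∃ e ∈ NonUnitalStarAlgebra.elemental ℂ x, 0 ≤ e ∧ ‖e‖ ≤ ‖y‖ ∧ x - e ∈ L := by
  -- Truncation at height `‖y‖` fixes `y`, so it moves `x` only inside its class modulo `L`.
  let f : ℝ → ℝ := fun t ↦ min t ‖y‖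
  have hf : Continuous f := by fun_prop
  have hf_nonneg : ∀ t ∈ quasispectrum ℝ x, 0 ≤ f t := fun t ht ↦
    le_min (quasispectrum_nonneg_of_nonneg x hx t ht) (norm_nonneg y)
  have hfy : cfcₙ f y = y := by
    rw [cfcₙ_congr (f := f) (g := id) fun t ht ↦ min_eq_left
      ((le_abs_self t).trans
        (NonUnitalIsometricContinuousFunctionalCalculus.norm_quasispectrum_le y ht)), cfcₙ_id ℝ y]
  have := NonUnitalStarAlgebra.elemental.isClosed ℂ x
  refine ⟨cfcₙ f x, _root_.cfcₙ_mem f (NonUnitalStarAlgebra.elemental.self_mem ℂ x),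
    cfcₙ_nonneg hf_nonneg, norm_cfcₙ_le fun t ht ↦ ?_, ?_⟩
  · rw [Real.norm_of_nonneg (hf_nonneg t ht)]
    exact min_le_right t ‖y‖
  · have hyf := cfcₙ_sub_cfcₙ_mem hL hy hx.isSelfAdjoint (by simpa using L.neg_mem hxy) hf
    rw [hfy] at hyf
    simpa using L.add_mem hxy hyf

end ClosedIdeal

/-! ### States -/

/-- A positive functional: a continuous linear functional that is nonnegative on all `a⋆a`.
States are the positive functionals of norm one. -/
def IsPositiveFunctional {E : Type*} [SeminormedAddCommGroup E] [NormedSpace ℂ E] [Mul E] [Star E]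
    (φ : E →L[ℂ] ℂ) : Prop :=
  ∀ a : E, 0 ≤ φ (star a * a)

lemma IsState.isPositiveFunctional {E : Type*} [SeminormedAddCommGroup E] [NormedSpace ℂ E] [Mul E]
    [Star E] {φ : E →L[ℂ] ℂ} (hφ : IsState φ) : IsPositiveFunctional φ :=
  hφ.1

namespace IsPositiveFunctional

variable {E : Type*} [NonUnitalCStarAlgebra E] {φ : E →L[ℂ] ℂ}

lemma apply_nonneg (hφ : IsPositiveFunctional φ) {a : E} (ha : 0 ≤ a) : 0 ≤ φ a := by
  obtain ⟨s, rfl⟩ := CStarAlgebra.nonneg_iff_eq_star_mul_self.mp ha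
  exact hφ s

lemma norm_apply_star_mul_sq_le (hφ : IsPositiveFunctional φ) (a b : E) :
    ‖φ (star a * b)‖ ^ 2 ≤ ‖φ (star a * a)‖ * ‖φ (star b * b)‖ := by
  let f : E →ₚ[ℂ] ℂ := PositiveLinearMap.mk₀ (φ : E →ₗ[ℂ] ℂ) fun _ ↦ hφ.apply_nonneg
  have hnorm (x : E) : ‖f.toPreGNS x‖ ^ 2 = ‖φ (star x * x)‖ := by
    have : ((‖f.toPreGNS x‖ ^ 2 : ℝ) : ℂ) = φ (star x * x) := by
      rw [Complex.ofReal_pow]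
      exact f.preGNS_norm_sq (f.toPreGNS x)
    rw [← this, Complex.norm_real, Real.norm_of_nonneg (by positivity)]
  have hinner := norm_inner_le_norm (𝕜 := ℂ) (f.toPreGNS a) (f.toPreGNS b)
  rw [PositiveLinearMap.preGNS_inner_def] at hinner
  rw [← hnorm, ← hnorm, ← mul_pow]
  exact pow_le_pow_left₀ (norm_nonneg _) hinner 2

lemma norm_apply_sq_le (hφ : IsPositiveFunctional φ) (a : E) :
    ‖φ a‖ ^ 2 ≤ ‖φ‖ * ‖φ (star a * a)‖ := by
  have hunit := CStarAlgebra.increasingApproximateUnit E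
  have hlim : Filter.Tendsto (fun e ↦ ‖φ (e * a)‖ ^ 2) (CStarAlgebra.approximateUnit E)
      (nhds (‖φ a‖ ^ 2)) :=
    ((φ.continuous.tendsto _).comp (hunit.tendsto_mul_right a)).norm.pow 2
  refine le_of_tendsto hlim ?_
  filter_upwards [hunit.eventually_norm, hunit.eventually_star_eq] with e he hes
  have hee : ‖φ (star e * e)‖ ≤ ‖φ‖ := by
    simpa using φ.le_opNorm_of_le (c := 1)
      (by rw [CStarRing.norm_star_mul_self]; exact mul_le_one₀ he (norm_nonneg e) he)
  calc ‖φ (e * a)‖ ^ 2 = ‖φ (star e * a)‖ ^ 2 := by rw [hes]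
    _ ≤ ‖φ (star e * e)‖ * ‖φ (star a * a)‖ := hφ.norm_apply_star_mul_sq_le e a
    _ ≤ ‖φ‖ * ‖φ (star a * a)‖ := by gcongr

lemma apply_eq_zero_of_apply_star_mul_self (hφ : IsPositiveFunctional φ) {a : E}
    (ha : φ (star a * a) = 0) : φ a = 0 := by
  have h := hφ.norm_apply_sq_le a
  rw [ha, norm_zero, mul_zero] at h
  exact norm_eq_zero.mp (pow_eq_zero_iff two_ne_zero |>.mp (h.antisymm (sq_nonneg _)))

lemma apply_eq_zero_of_mem_Kset (hφ : IsPositiveFunctional φ) {a : E} (ha : a ∈ Kset φ) :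
    φ a = 0 := by
  refine hφ.apply_eq_zero_of_apply_star_mul_self (hφ.apply_eq_zero_of_apply_star_mul_self ?_)
  simpa only [star_mul, star_star, mul_assoc] using ha (star a) (star a * a)

end IsPositiveFunctional

section Unital

variable {E : Type*} [CStarAlgebra E]

lemma norm_two_smul_sub_one_le {a : E} (ha : 0 ≤ a) (ha1 : ‖a‖ ≤ 1) : ‖(2 : ℝ) • a - 1‖ ≤ 1 := by
  have hcfc : (2 : ℝ) • a - 1 = cfc (fun t : ℝ ↦ 2 * t - 1) a := by
    rw [cfc_sub .., cfc_const_mul .., cfc_id' ℝ a, cfc_const_one ℝ a]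
  rw [hcfc]
  refine norm_cfc_le zero_le_one fun t ht ↦ ?_
  have ht0 : 0 ≤ t := spectrum_nonneg_of_nonneg ha ht
  have ht1 : |t| ≤ 1 := (IsometricContinuousFunctionalCalculus.norm_spectrum_le a ht).trans ha1
  rw [Real.norm_eq_abs, abs_le]
  constructor <;> linarith [le_abs_self t]

lemma norm_sub_I_smul_one_sq_le [Nontrivial E] {u : E} (hu : IsSelfAdjoint u) (t : ℝ) :
    ‖u - (t * Complex.I) • (1 : E)‖ ^ 2 ≤ ‖u‖ ^ 2 + t ^ 2 := by
  set c : ℂ := t * Complex.I with hc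
  have hcc : c * c = -((t ^ 2 : ℝ) : ℂ) := by
    rw [hc, Complex.ofReal_pow]
    linear_combination (t : ℂ) ^ 2 * Complex.I_mul_I
  have hstar : star (u - c • (1 : E)) = u + c • (1 : E) := by simp [hc, hu.star_eq]
  have hsq : star (u - c • (1 : E)) * (u - c • (1 : E)) = u * u + ((t ^ 2 : ℝ) : ℂ) • (1 : E) := by
    rw [hstar]
    simp only [mul_sub, add_mul, smul_mul_assoc, mul_smul_comm, one_mul, mul_one, smul_add,
      smul_smul, hcc, neg_smul]
    abel
  rw [sq, ← CStarRing.norm_star_mul_self, hsq, sq ‖u‖]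
  refine (norm_add_le _ _).trans (add_le_add (norm_mul_le u u) ?_)
  rw [norm_smul, norm_one, mul_one, Complex.norm_real, Real.norm_of_nonneg (sq_nonneg t)]

variable [Nontrivial E] {τ : E →L[ℂ] ℂ}

lemma im_apply_eq_zero_of_norm_le_one (hτ : ‖τ‖ ≤ 1) (hτ1 : τ 1 = 1) {u : E}
    (hu : IsSelfAdjoint u) : (τ u).im = 0 := by
  have hbound (t : ℝ) : ((τ u).im - t) ^ 2 ≤ ‖u‖ ^ 2 + t ^ 2 := by
    have him : (τ u).im - t = (τ (u - (t * Complex.I) • (1 : E))).im := by simp [hτ1]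
    calc ((τ u).im - t) ^ 2 ≤ ‖τ (u - (t * Complex.I) • (1 : E))‖ ^ 2 := by
          rw [him, ← sq_abs]
          exact pow_le_pow_left₀ (abs_nonneg _) (Complex.abs_im_le_norm _) 2
      _ ≤ ‖u - (t * Complex.I) • (1 : E)‖ ^ 2 :=
          pow_le_pow_left₀ (norm_nonneg _) (τ.le_of_opNorm_le hτ _ |>.trans_eq (one_mul _)) 2
      _ ≤ ‖u‖ ^ 2 + t ^ 2 := norm_sub_I_smul_one_sq_le hu t
  -- `hbound` bounds a nonconstant affine function of `t` from below unless `im (τ u) = 0`.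
  by_contra h_ne
  have h := hbound (-(‖u‖ ^ 2 + 1) / (2 * (τ u).im))
  have : (τ u).im * (-(‖u‖ ^ 2 + 1) / (2 * (τ u).im)) = -(‖u‖ ^ 2 + 1) / 2 := by field_simp
  nlinarith [sq_nonneg (τ u).im]

lemma isPositiveFunctional_of_norm_le_one (hτ : ‖τ‖ ≤ 1) (hτ1 : τ 1 = 1) :
    IsPositiveFunctional τ := by
  have nonneg_of_norm_le_one (a : E) (ha : 0 ≤ a) (ha1 : ‖a‖ ≤ 1) : 0 ≤ τ a := by
    have hnorm : ‖τ ((2 : ℝ) • a - 1)‖ ≤ 1 :=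
      τ.unit_le_opNorm _ (norm_two_smul_sub_one_le ha ha1) |>.trans hτ
    have hτa : (τ ((2 : ℝ) • a - 1)).re = 2 * (τ a).re - 1 := by
      simp [hτ1, ← Complex.coe_smul]
    have hre : -1 ≤ (τ ((2 : ℝ) • a - 1)).re :=
      (abs_le.mp ((Complex.abs_re_le_norm _).trans hnorm)).1
    have him : (τ a).im = 0 := im_apply_eq_zero_of_norm_le_one hτ hτ1 ha.isSelfAdjoint
    exact Complex.nonneg_iff.mpr ⟨by linarith, him.symm⟩
  intro a
  set x := star a * a
  have hx : ‖x‖ • ‖x‖⁻¹ • x = x := by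
    rcases eq_or_ne x 0 with h | h
    · simp [h]
    · exact smul_inv_smul₀ (norm_ne_zero_iff.mpr h) x
  have h := nonneg_of_norm_le_one (‖x‖⁻¹ • x)
    (smul_nonneg (by positivity) (star_mul_self_nonneg a))
    (by rw [norm_smul, norm_inv, norm_norm]; exact inv_mul_le_one)
  rw [← hx, ← Complex.coe_smul, map_smul]
  exact smul_nonneg (by simp) h

end Unital

lemma exists_extension_of_linearIsometry {𝕜 E F : Type*} [RCLike 𝕜] [NormedAddCommGroup E]
    [NormedSpace 𝕜 E] [SeminormedAddCommGroup F] [NormedSpace 𝕜 F] (i : E →ₗᵢ[𝕜] F)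
    (σ : E →L[𝕜] 𝕜) : ∃ τ : F →L[𝕜] 𝕜, (∀ a, τ (i a) = σ a) ∧ ‖τ‖ ≤ ‖σ‖ := by
  let e : E ≃ₗᵢ[𝕜] LinearMap.range i.toLinearMap := i.equivRange
  obtain ⟨τ, hτ, hnorm⟩ := exists_extension_norm_eq (LinearMap.range i.toLinearMap)
    (σ ∘L (e.symm.toContinuousLinearEquiv : _ →L[𝕜] E))
  refine ⟨τ, fun a ↦ ?_, ?_⟩
  · simpa [e] using hτ (e a)
  · rw [hnorm]
    refine ContinuousLinearMap.opNorm_le_bound _ (norm_nonneg σ) fun x ↦ ?_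
    simpa using σ.le_opNorm (e.symm x)

section States

variable {E : Type*} [NonUnitalCStarAlgebra E]

lemma exists_unitization_extension_apply_one {σ : E →L[ℂ] ℂ} (hσ : ‖σ‖ ≤ 1)
    (hlarge : ∀ δ < (1 : ℝ), ∃ e : E, 0 ≤ e ∧ ‖e‖ ≤ 1 ∧ δ < (σ e).re) :
    ∃ τ : Unitization ℂ E →L[ℂ] ℂ, (∀ a : E, τ a = σ a) ∧ ‖τ‖ ≤ 1 ∧ τ 1 = 1 := by
  let i : E →ₗᵢ[ℂ] Unitization ℂ E :=
    ⟨Unitization.inrHom ℂ ℂ E, fun a ↦ Unitization.norm_inr (𝕜 := ℂ) a⟩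
  obtain ⟨τ, hτσ, hτ⟩ := exists_extension_of_linearIsometry i σ
  replace hτσ : ∀ a : E, τ a = σ a := hτσ
  replace hτ := hτ.trans hσ
  refine ⟨τ, hτσ, hτ, ?_⟩
  have hτ1_le : ‖τ 1‖ ≤ 1 := (τ.unit_le_opNorm 1 norm_one.le).trans hτ
  have hτ1_re : 1 ≤ (τ 1).re := by
    refine le_of_forall_lt fun δ hδ ↦ ?_
    obtain ⟨e, he, he1, hδe⟩ := hlarge ((1 + δ) / 2) (by linarith)
    have hnorm : ‖τ ((2 : ℝ) • (e : Unitization ℂ E) - 1)‖ ≤ 1 :=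
      τ.unit_le_opNorm _ (norm_two_smul_sub_one_le (Unitization.inr_nonneg_iff.mpr he)
        ((Unitization.norm_inr (𝕜 := ℂ) e).trans_le he1)) |>.trans hτ
    have hτe : (τ ((2 : ℝ) • (e : Unitization ℂ E) - 1)).re = 2 * (σ e).re - (τ 1).re := by
      simp [hτσ, ← Complex.coe_smul]
    linarith [(Complex.re_le_norm _).trans hnorm]
  have hτ1_norm : ‖τ 1‖ = 1 := hτ1_le.antisymm (hτ1_re.trans (Complex.re_le_norm _))
  have hτ1_nonneg : 0 ≤ τ 1 :=
    Complex.re_eq_norm.mp ((Complex.re_le_norm _).antisymm (hτ1_le.trans hτ1_re))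
  rw [Complex.eq_coe_norm_of_nonneg hτ1_nonneg, hτ1_norm, Complex.ofReal_one]

lemma isState_of_forall_exists_lt_re {σ : E →L[ℂ] ℂ} (hσ : ‖σ‖ ≤ 1)
    (hlarge : ∀ δ < (1 : ℝ), ∃ e : E, 0 ≤ e ∧ ‖e‖ ≤ 1 ∧ δ < (σ e).re) : IsState σ := by
  constructor
  · obtain ⟨τ, hτσ, hτ, hτ1⟩ := exists_unitization_extension_apply_one hσ hlarge
    intro a
    simpa only [← Unitization.inr_star, ← Unitization.inr_mul, hτσ]
      using isPositiveFunctional_of_norm_le_one hτ hτ1 (a : Unitization ℂ E)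
  · refine hσ.antisymm (le_of_forall_lt fun δ hδ ↦ ?_)
    obtain ⟨e, -, he1, hδe⟩ := hlarge δ hδ
    exact hδe.trans_le ((Complex.re_le_norm _).trans (σ.unit_le_opNorm e he1))

lemma IsState.exists_lt_re {φ : E →L[ℂ] ℂ} (hφ : IsState φ) {δ : ℝ} (hδ : δ < 1) :
    ∃ e : E, 0 ≤ e ∧ ‖e‖ ≤ 1 ∧ δ < (φ e).re := by
  obtain ⟨b, hb1, hδb⟩ : ∃ b : E, ‖b‖ ≤ 1 ∧ δ < ‖φ b‖ ^ 2 := by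
    by_contra! h
    have : ‖φ‖ ≤ √δ := φ.opNorm_le_of_unit_norm (Real.sqrt_nonneg δ) fun x hx ↦
      Real.le_sqrt_of_sq_le (h x hx.le)
    rw [hφ.2, Real.one_le_sqrt] at this
    exact hδ.not_ge this
  refine ⟨star b * b, star_mul_self_nonneg b, ?_, ?_⟩
  · rw [CStarRing.norm_star_mul_self]
    exact mul_le_one₀ hb1 (norm_nonneg b) hb1
  · calc δ < ‖φ b‖ ^ 2 := hδb
      _ ≤ ‖φ (star b * b)‖ := by simpa [hφ.2] using hφ.isPositiveFunctional.norm_apply_sq_le b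
      _ = (φ (star b * b)).re := (Complex.re_eq_norm.mpr (hφ.1 b)).symm

lemma IsState.of_comp {B : Type*} [NonUnitalCStarAlgebra B] {φ : B →L[ℂ] ℂ} (hφ : IsState φ)
    (ι : B →⋆ₙₐ[ℂ] E) {σ : E →L[ℂ] ℂ} (hσ : ‖σ‖ ≤ 1) (hσφ : ∀ b, σ (ι b) = φ b) : IsState σ := by
  refine isState_of_forall_exists_lt_re hσ fun δ hδ ↦ ?_
  obtain ⟨e, he, he1, hδe⟩ := hφ.exists_lt_re hδ
  exact ⟨ι e, map_nonneg ι he, (NonUnitalStarAlgHom.norm_apply_le ι e).trans he1, by rwa [hσφ]⟩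

end States

/-! ### Faces of the state space -/

section WeakStar

variable {E : Type*} [NormedAddCommGroup E] [NormedSpace ℂ E]

lemma locallyConvexSpace_weakDual : LocallyConvexSpace ℝ (WeakDual ℂ E) :=
  LocallyConvexSpace.induced
    ({ toFun := fun φ x ↦ φ x
       map_add' := fun _ _ ↦ rfl
       map_smul' := fun _ _ ↦ rfl } : WeakDual ℂ E →ₗ[ℝ] E → ℂ)

/-- Weak-* closedness of a set of functionals, stated through the synonym `WeakDual` because
`E →L[ℂ] ℂ` itself carries the norm topology. -/
def IsWeakStarClosed (F : Set (E →L[ℂ] ℂ)) : Prop :=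
  IsClosed (WeakDual.toStrongDual (𝕜 := ℂ) (E := E) ⁻¹' F)

lemma IsWeakStarClosed.inter {F G : Set (E →L[ℂ] ℂ)} (hF : IsWeakStarClosed F)
    (hG : IsWeakStarClosed G) : IsWeakStarClosed (F ∩ G) :=
  IsClosed.inter hF hG

lemma isWeakStarClosed_eqOn (f : E → ℂ) (S : Set E) :
    IsWeakStarClosed {φ : E →L[ℂ] ℂ | Set.EqOn φ f S} := by
  simp only [Set.EqOn, Set.ofPred_forall]
  exact isClosed_biInter fun x _ ↦ isClosed_singleton.preimage (WeakDual.eval_continuous x)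

lemma isWeakStarClosed_closedBall (φ : E →L[ℂ] ℂ) (r : ℝ) :
    IsWeakStarClosed (Metric.closedBall φ r) :=
  WeakDual.isClosed_closedBall φ r

lemma extremePoints_nonempty_of_isWeakStarClosed {F : Set (E →L[ℂ] ℂ)} (hF : IsWeakStarClosed F)
    (hbdd : Bornology.IsBounded F) (hne : F.Nonempty) : (F.extremePoints ℝ).Nonempty := by
  have := locallyConvexSpace_weakDual (E := E)
  let e : WeakDual ℂ E ≃ₗ[ℝ] (E →L[ℂ] ℂ) :=
    { WeakDual.toStrongDual with map_smul' := fun _ _ ↦ rfl }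
  have hcompact : IsCompact (e ⁻¹' F) := WeakDual.isCompact_of_bounded_of_closed hbdd hF
  have hext := (hcompact.extremePoints_nonempty (hne.preimage e.surjective)).image e
  rwa [image_extremePoints (𝕜 := ℝ) e, Set.image_preimage_eq F e.surjective] at hext

end WeakStar

lemma isExtreme_inter_preimage_singleton {𝕜 V W : Type*} [Ring 𝕜] [PartialOrder 𝕜]
    [AddRightMono 𝕜] [AddCommGroup V] [Module 𝕜 V] [AddCommGroup W] [Module 𝕜 W] (T : V →ₗ[𝕜] W)
    {C : Set V} {D : Set W} (hT : Set.MapsTo T C D) {w : W} (hw : w ∈ D.extremePoints 𝕜) :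
    IsExtreme 𝕜 C (C ∩ T ⁻¹' {w}) := by
  refine ⟨Set.inter_subset_left, fun v₁ hv₁ v₂ hv₂ v hv hseg ↦ ⟨hv₁, ?_⟩⟩
  refine hw.2 (hT hv₁) (hT hv₂) ?_
  rw [← show T v = w from hv.2]
  exact image_openSegment 𝕜 T.toAffineMap v₁ v₂ ▸ Set.mem_image_of_mem T hseg

lemma zero_mem_extremePoints_Ici {𝕜 V : Type*} [DivisionRing 𝕜] [PartialOrder 𝕜]
    [AddCommGroup V] [PartialOrder V] [IsOrderedAddMonoid V] [Module 𝕜 V] [PosSMulMono 𝕜 V] :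
    (0 : V) ∈ (Set.Ici 0).extremePoints 𝕜 := by
  refine ⟨Set.self_mem_Ici, ?_⟩
  rintro v₁ hv₁ v₂ hv₂ ⟨s, t, hs, ht, -, h⟩
  rw [add_eq_zero_iff_of_nonneg (smul_nonneg hs.le hv₁) (smul_nonneg ht.le hv₂)] at h
  exact (smul_eq_zero_iff_right hs.ne').mp h.1

-- This makes purity on `B` applicable to restrictions of states of `A`, which are contractive but
-- not a priori of norm one.
lemma IsPureState.mem_extremePoints_norm_le_one {E : Type*} [NormedAddCommGroup E]
    [NormedSpace ℂ E] [Mul E] [Star E] {φ : E →L[ℂ] ℂ} (hφ : IsPureState φ) :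
    φ ∈ {ψ : E →L[ℂ] ℂ | IsPositiveFunctional ψ ∧ ‖ψ‖ ≤ 1}.extremePoints ℝ := by
  refine ⟨⟨hφ.1.1, hφ.1.2.le⟩, fun ψ₁ h₁ ψ₂ h₂ hseg ↦ ?_⟩
  obtain ⟨hnorm₁, hnorm₂⟩ : ‖ψ₁‖ = 1 ∧ ‖ψ₂‖ = 1 := by
    obtain ⟨s, t, hs, ht, hst, h⟩ := hseg
    have hle : 1 ≤ s * ‖ψ₁‖ + t * ‖ψ₂‖ := by
      rw [← hφ.1.2, ← h]
      refine (norm_add_le _ _).trans_eq ?_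
      rw [norm_smul, norm_smul, Real.norm_of_nonneg hs.le, Real.norm_of_nonneg ht.le]
    constructor <;> nlinarith [h₁.2, h₂.2]
  exact hφ.2 ⟨h₁.1, hnorm₁⟩ ⟨h₂.1, hnorm₂⟩ hseg

lemma exists_isPureState_eqOn {E : Type*} [NonUnitalCStarAlgebra E] {σ : E →L[ℂ] ℂ} {S : Set E}
    (hσ : ‖σ‖ ≤ 1) (hstate : ∀ ψ : E →L[ℂ] ℂ, ‖ψ‖ ≤ 1 → Set.EqOn ψ σ S → IsState ψ)
    (hface : IsExtreme ℝ {ψ : E →L[ℂ] ℂ | IsState ψ} {ψ | IsState ψ ∧ Set.EqOn ψ σ S}) :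
    ∃ ψ, IsPureState ψ ∧ Set.EqOn ψ σ S := by
  have hF : {ψ : E →L[ℂ] ℂ | IsState ψ ∧ Set.EqOn ψ σ S} =
      Metric.closedBall 0 1 ∩ {ψ : E →L[ℂ] ℂ | Set.EqOn ψ σ S} := by
    refine Set.ext fun ψ ↦ and_congr_left fun hψ ↦ ?_
    rw [mem_closedBall_zero_iff]
    exact ⟨fun h ↦ h.2.le, fun h ↦ hstate ψ h hψ⟩
  obtain ⟨ψ, hψ⟩ := extremePoints_nonempty_of_isWeakStarClosed
    ((isWeakStarClosed_closedBall 0 1).inter (isWeakStarClosed_eqOn σ S))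
    (Metric.isBounded_closedBall.subset Set.inter_subset_left)
    ⟨σ, mem_closedBall_zero_iff.mpr hσ, Set.eqOn_refl σ S⟩
  rw [← hF] at hψ
  exact ⟨ψ, hface.extremePoints_subset_extremePoints hψ, hψ.1.2⟩

lemma isExtreme_isState_eqOn_ideal {E : Type*} [NonUnitalCStarAlgebra E] (L : TwoSidedIdeal E)
    {σ : E →L[ℂ] ℂ} (hσ : ∀ l ∈ L, σ l = 0) :
    IsExtreme ℝ {ψ : E →L[ℂ] ℂ | IsState ψ} {ψ | IsState ψ ∧ Set.EqOn ψ σ L} := by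
  refine ⟨fun ψ hψ ↦ hψ.1, fun ψ₁ h₁ ψ₂ h₂ ψ hψ hseg ↦ ⟨h₁, fun l hl ↦ ?_⟩⟩
  rw [hσ l hl]
  refine h₁.isPositiveFunctional.apply_eq_zero_of_apply_star_mul_self ?_
  let T : (E →L[ℂ] ℂ) →ₗ[ℝ] ℂ := (ContinuousLinearMap.apply ℂ ℂ (star l * l)).restrictScalars ℝ
  have hlevel := isExtreme_inter_preimage_singleton T (C := {ψ : E →L[ℂ] ℂ | IsState ψ})
    (fun ψ hψ ↦ hψ.1 l) zero_mem_extremePoints_Ici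
  refine (hlevel.2 h₁ h₂ ⟨hψ.1, ?_⟩ hseg).2
  have := L.mul_mem_left (star l) l hl
  exact (hψ.2 this).trans (hσ _ this)

lemma isExtreme_isState_eqOn_subalgebra {A : Type*} [NonUnitalCStarAlgebra A]
    (B : NonUnitalStarSubalgebra ℂ A) {φ : B →L[ℂ] ℂ} (hφ : IsPureState φ) {σ : A →L[ℂ] ℂ}
    (hσ : ∀ b : B, σ b = φ b) :
    IsExtreme ℝ {ψ : A →L[ℂ] ℂ | IsState ψ} {ψ | IsState ψ ∧ Set.EqOn ψ σ B} := by
  let ι : B →L[ℂ] A := B.toNonUnitalSubalgebra.toSubmodule.subtypeL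
  let T : (A →L[ℂ] ℂ) →L[ℝ] (B →L[ℂ] ℂ) :=
    (ContinuousLinearMap.precomp (σ := .id ℂ) ℂ ι).restrictScalars ℝ
  have hT : Set.MapsTo T {ψ | IsState ψ} {ψ | IsPositiveFunctional ψ ∧ ‖ψ‖ ≤ 1} := fun ψ hψ ↦
    ⟨fun b ↦ hψ.1 b, (T ψ).opNorm_le_bound zero_le_one fun b ↦ ψ.le_of_opNorm_le hψ.2.le b⟩
  have hiff (ψ : A →L[ℂ] ℂ) : Set.EqOn ψ σ B ↔ T ψ = φ := by
    refine ⟨fun h ↦ ContinuousLinearMap.ext fun b ↦ (h b.2).trans (hσ b), fun h b hb ↦ ?_⟩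
    exact DFunLike.congr_fun h ⟨b, hb⟩ |>.trans (hσ ⟨b, hb⟩).symm
  simp only [hiff]
  exact isExtreme_inter_preimage_singleton T.toLinearMap hT hφ.mem_extremePoints_norm_le_one

/-! ### Extension of states -/

lemma exists_extension_norm_le_one_of_norm_apply_le_norm_sub {𝕜 E : Type*} [RCLike 𝕜]
    [SeminormedAddCommGroup E] [NormedSpace 𝕜 E] {S N : Submodule 𝕜 E} (f : S →L[𝕜] 𝕜)
    (hf : ∀ x : S, ∀ l ∈ N, ‖f x‖ ≤ ‖(x : E) - l‖) :
    ∃ g : E →L[𝕜] 𝕜, ‖g‖ ≤ 1 ∧ (∀ x : S, g x = f x) ∧ ∀ l ∈ N, g l = 0 := by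
  let p : Seminorm 𝕜 E := (normSeminorm 𝕜 (E ⧸ N)).comp N.mkQ
  have hp_le (x : E) : p x ≤ ‖x‖ := Submodule.Quotient.norm_mk_le N x
  have hp_cont : Continuous p := continuous_norm.comp N.continuous_mkQ
  have hfp (x : S) : ‖f x‖ ≤ p x := by
    rw [show p x = Metric.infDist (x : E) N from QuotientAddGroup.norm_mk x.1,
      Metric.le_infDist ⟨0, N.zero_mem⟩]
    exact fun l hl ↦ (hf x l hl).trans_eq (dist_eq_norm _ _).symm
  obtain ⟨g, hgf, hgp⟩ :=
    Module.Dual.exists_continuous_extension_of_le_seminorm S (f : S →ₗ[𝕜] 𝕜) hp_cont hfp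
  refine ⟨g, g.opNorm_le_bound zero_le_one fun x ↦ ?_, hgf, fun l hl ↦ ?_⟩
  · rw [one_mul]
    exact (hgp x).trans (hp_le x)
  · have hpl : p l = 0 := by simp [p, (Submodule.Quotient.mk_eq_zero N).mpr hl]
    exact norm_le_zero_iff.mp (hpl ▸ hgp l)

section Extension

variable {A : Type*} [NonUnitalCStarAlgebra A] {B : NonUnitalStarSubalgebra ℂ A}
  [hB : IsClosed (B : Set A)] {L : TwoSidedIdeal A} {φ : B →L[ℂ] ℂ}

lemma IsState.norm_apply_le_norm_sub (hL : IsClosed (L : Set A)) (hφ : IsState φ)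
    (hφL : ∀ b : B, (b : A) ∈ L → φ b = 0) (b : B) {l : A} (hl : l ∈ L) :
    ‖φ b‖ ≤ ‖(b : A) - l‖ := by
  have hxy : star (b : A) * b - star ((b : A) - l) * (b - l) ∈ L := by
    have hmem := L.add_mem (L.mul_mem_left (star ((b : A) - l)) l hl)
      (L.mul_mem_right (star l) (b : A) (ClosedIdeal.star_mem hL hl))
    convert hmem using 1
    rw [star_sub]
    noncomm_ring
  obtain ⟨e, he, -, hey, hxe⟩ := ClosedIdeal.exists_mem_elemental_nonneg_norm_le hL
    (star_mul_self_nonneg (b : A)) (.star_mul_self _) hxy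
  have heB : e ∈ B :=
    NonUnitalStarAlgebra.elemental.le_of_mem hB (mul_mem (star_mem b.2) b.2) he
  have hφe : φ (star b * b) = φ ⟨e, heB⟩ := by
    rw [← sub_eq_zero, ← map_sub]
    exact hφL _ hxe
  refine le_of_sq_le_sq ?_ (norm_nonneg _)
  calc ‖φ b‖ ^ 2 ≤ ‖φ (star b * b)‖ := by
        simpa [hφ.2] using hφ.isPositiveFunctional.norm_apply_sq_le b
    _ ≤ ‖e‖ := by rw [hφe]; exact φ.le_of_opNorm_le hφ.2.le _ |>.trans_eq (one_mul _)
    _ ≤ ‖(b : A) - l‖ ^ 2 := by rwa [sq, ← CStarRing.norm_star_mul_self]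

lemma exists_isState_extension_vanishing (hL : IsClosed (L : Set A)) (hφ : IsState φ)
    (hφL : ∀ b : B, (b : A) ∈ L → φ b = 0) :
    ∃ σ : A →L[ℂ] ℂ, IsState σ ∧ (∀ b : B, σ b = φ b) ∧ ∀ l ∈ L, σ l = 0 := by
  obtain ⟨σ, hσ, hσφ, hσL⟩ := exists_extension_norm_le_one_of_norm_apply_le_norm_sub
    (S := B.toNonUnitalSubalgebra.toSubmodule) (N := ClosedIdeal.toSubmodule hL) φ
    fun b l ↦ hφ.norm_apply_le_norm_sub hL hφL b
  exact ⟨σ, hφ.of_comp (NonUnitalStarSubalgebraClass.subtype B) hσ hσφ, hσφ, hσL⟩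

lemma exists_isPureState_extension_vanishing (hL : IsClosed (L : Set A)) (hφ : IsPureState φ)
    (hφL : ∀ b : B, (b : A) ∈ L → φ b = 0) :
    ∃ σ : A →L[ℂ] ℂ, IsPureState σ ∧ (∀ b : B, σ b = φ b) ∧ ∀ l ∈ L, σ l = 0 := by
  obtain ⟨σ, hσ, hσφ, hσL⟩ := exists_isState_extension_vanishing hL hφ.1 hφL
  have hstate (ψ : A →L[ℂ] ℂ) (hψ : ‖ψ‖ ≤ 1) (hψσ : Set.EqOn ψ σ (B ∪ L)) : IsState ψ :=
    hφ.1.of_comp (NonUnitalStarSubalgebraClass.subtype B) hψ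
      fun b ↦ (hψσ (.inl b.2)).trans (hσφ b)
  have hface : IsExtreme ℝ {ψ : A →L[ℂ] ℂ | IsState ψ}
      {ψ | IsState ψ ∧ Set.EqOn ψ σ (B ∪ L)} := by
    convert (isExtreme_isState_eqOn_subalgebra B hφ hσφ).inter
      (isExtreme_isState_eqOn_ideal L hσL) using 1
    exact Set.ext fun ψ ↦ (and_congr_right' Set.eqOn_union).trans and_and_left
  obtain ⟨ψ, hψ, hψσ⟩ := exists_isPureState_eqOn hσ.2.le hstate hface
  exact ⟨ψ, hψ, fun b ↦ (hψσ (.inl b.2)).trans (hσφ b),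
    fun l hl ↦ (hψσ (.inr hl)).trans (hσL l hl)⟩

end Extension

/-! ### Separation by pure states -/

lemma exists_apply_eq_infDist {𝕜 E : Type*} [RCLike 𝕜] [SeminormedAddCommGroup E]
    [NormedSpace 𝕜 E] (N : Submodule 𝕜 E) (x : E) :
    ∃ g : E →L[𝕜] 𝕜, ‖g‖ ≤ 1 ∧ g x = (Metric.infDist x N : ℝ) ∧ ∀ l ∈ N, g l = 0 := by
  obtain ⟨g, hg, hgx⟩ := exists_dual_vector'' 𝕜 (N.mkQL x)
  refine ⟨g ∘L N.mkQL, ContinuousLinearMap.opNorm_le_bound _ zero_le_one fun y ↦ ?_, ?_,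
    fun l hl ↦ ?_⟩
  · exact (g.le_of_opNorm_le hg _).trans
      (mul_le_mul_of_nonneg_left (Submodule.Quotient.norm_mk_le N y) zero_le_one)
  · exact hgx.trans (congrArg _ (QuotientAddGroup.norm_mk x))
  · simp [(Submodule.Quotient.mk_eq_zero N).mpr hl]

section Separation

variable {E : Type*} [NonUnitalCStarAlgebra E] {I : TwoSidedIdeal E} {x : E}

lemma exists_nonneg_norm_lt_of_infDist_lt (hI : IsClosed (I : Set E)) (hx : 0 ≤ x) {r : ℝ}
    (hr : Metric.infDist x I < r) : ∃ e, 0 ≤ e ∧ ‖e‖ < r ∧ x - e ∈ I := by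
  obtain ⟨l, hl, hlr⟩ := (Metric.infDist_lt_iff ⟨0, I.zero_mem⟩).mp hr
  rw [dist_eq_norm] at hlr
  have hlI : (realPart l : E) ∈ I := by
    rw [realPart_apply_coe, ← Complex.coe_smul]
    exact ClosedIdeal.smul_mem hI _ (I.add_mem hl (ClosedIdeal.star_mem hI hl))
  have hre : ‖(realPart (x - l) : E)‖ < r := (realPart.norm_le _).trans_lt hlr
  have hxl : x - realPart (x - l) ∈ I := by
    rw [map_sub, AddSubgroupClass.coe_sub, hx.isSelfAdjoint.coe_realPart]
    simpa using hlI
  obtain ⟨e, -, he, her, hxe⟩ :=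
    ClosedIdeal.exists_mem_elemental_nonneg_norm_le hI hx (realPart (x - l)).2 hxl
  exact ⟨e, he, her.trans_lt hre, hxe⟩

lemma isState_of_apply_eq_infDist (hI : IsClosed (I : Set E)) (hx : 0 ≤ x) (hxI : x ∉ I)
    {g : E →L[ℂ] ℂ} (hg : ‖g‖ ≤ 1) (hgx : g x = Metric.infDist x I) (hgI : ∀ l ∈ I, g l = 0) :
    IsState g := by
  set r := Metric.infDist x I
  have hr : 0 < r := (hI.notMem_iff_infDist_pos ⟨0, I.zero_mem⟩).mp hxI
  refine isState_of_forall_exists_lt_re hg fun δ hδ ↦ ?_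
  -- Any `s` with `δ * s < r < s` serves as normalisation of an almost optimal `e`.
  set s := r * (2 - δ)
  have hs0 : 0 < s := mul_pos hr (by linarith)
  have hδs : δ < r / s := by
    rw [lt_div_iff₀ hs0]
    nlinarith [mul_pos hr (pow_pos (sub_pos.mpr hδ) 2)]
  obtain ⟨e, he, hes, hxe⟩ := exists_nonneg_norm_lt_of_infDist_lt (r := s) hI hx (by nlinarith)
  have hge : g e = r := by
    rw [← hgx, eq_comm, ← sub_eq_zero, ← map_sub, hgI _ hxe]
  refine ⟨s⁻¹ • e, smul_nonneg (by positivity) he, ?_, ?_⟩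
  · rw [norm_smul, norm_inv, Real.norm_of_nonneg hs0.le]
    exact inv_mul_le_one_of_le₀ hes.le hs0.le
  · rw [← Complex.coe_smul, map_smul, hge, smul_eq_mul, ← Complex.ofReal_mul, Complex.ofReal_re,
      inv_mul_eq_div]
    exact hδs

lemma isExtreme_isState_eqOn_ideal_union_singleton {g : E →L[ℂ] ℂ}
    (hgx : g x = Metric.infDist x I) (hgI : ∀ l ∈ I, g l = 0) :
    IsExtreme ℝ {ψ : E →L[ℂ] ℂ | IsState ψ} {ψ | IsState ψ ∧ Set.EqOn ψ g (I ∪ {x})} := by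
  let T : (E →L[ℂ] ℂ) →ₗ[ℝ] ℂ := (ContinuousLinearMap.apply ℂ ℂ x).restrictScalars ℝ
  have hT : Set.MapsTo T {ψ | IsState ψ ∧ Set.EqOn ψ g I}
      (Metric.closedBall 0 (Metric.infDist x I)) := by
    rintro ψ ⟨hψ, hψg⟩
    rw [mem_closedBall_zero_iff, Metric.le_infDist ⟨0, I.zero_mem⟩]
    intro l hl
    calc ‖ψ x‖ = ‖ψ (x - l)‖ := by rw [map_sub, hψg hl, hgI l hl, sub_zero]
      _ ≤ dist x l := by simpa [hψ.2, dist_eq_norm] using ψ.le_opNorm (x - l)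
  have hgx_mem : g x ∈ (Metric.closedBall (0 : ℂ) (Metric.infDist x I)).extremePoints ℝ := by
    rw [StrictConvexSpace.extremePoints_closedBall_eq_sphere, mem_sphere_zero_iff_norm, hgx,
      Complex.norm_real, Real.norm_of_nonneg Metric.infDist_nonneg]
  simp only [Set.eqOn_union, Set.eqOn_singleton, ← and_assoc]
  exact (isExtreme_isState_eqOn_ideal I hgI).trans
    (isExtreme_inter_preimage_singleton T hT hgx_mem)

lemma exists_isPureState_vanishing_apply_star_mul_self_ne_zero (hI : IsClosed (I : Set E))
    (hx : x ∉ I) :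
    ∃ φ : E →L[ℂ] ℂ, IsPureState φ ∧ (∀ l ∈ I, φ l = 0) ∧ φ (star x * x) ≠ 0 := by
  have hxI : star x * x ∉ I := mt (ClosedIdeal.mem_of_star_mul_self_mem hI) hx
  obtain ⟨g, hg, hgx, hgI⟩ := exists_apply_eq_infDist (ClosedIdeal.toSubmodule hI) (star x * x)
  replace hgx : g (star x * x) = Metric.infDist (star x * x) I := hgx
  have hstate (ψ : E →L[ℂ] ℂ) (hψ : ‖ψ‖ ≤ 1) (hψg : Set.EqOn ψ g (I ∪ {star x * x})) :
      IsState ψ :=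
    isState_of_apply_eq_infDist hI (star_mul_self_nonneg x) hxI hψ ((hψg (.inr rfl)).trans hgx)
      fun l hl ↦ (hψg (.inl hl)).trans (hgI l hl)
  obtain ⟨φ, hφ, hφg⟩ := exists_isPureState_eqOn hg hstate
    (isExtreme_isState_eqOn_ideal_union_singleton hgx hgI)
  refine ⟨φ, hφ, fun l hl ↦ (hφg (.inl hl)).trans (hgI l hl), ?_⟩
  rw [hφg (.inr rfl), hgx, Complex.ofReal_ne_zero]
  exact ((hI.notMem_iff_infDist_pos ⟨0, I.zero_mem⟩).mp hxI).ne'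

end Separation

/-! ### Relative dominance -/

section Dominance

variable {A : Type*} [NonUnitalCStarAlgebra A]

/-- The kernel ideal `K_ψ` as a two-sided ideal. -/
def kernelIdeal (ψ : A →L[ℂ] ℂ) : TwoSidedIdeal A :=
  .mk' (Kset ψ) (fun u v ↦ by simp)
    (fun {a b} ha hb u v ↦ by rw [mul_add, add_mul, map_add, ha, hb, add_zero])
    (fun {a} ha u v ↦ by rw [mul_neg, neg_mul, map_neg, ha, neg_zero])
    (fun {a b} hb u v ↦ by rw [← mul_assoc]; exact hb (u * a) v)
    (fun {a b} ha u v ↦ by rw [← mul_assoc, mul_assoc (u * a)]; exact ha u (b * v))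

lemma coe_kernelIdeal (ψ : A →L[ℂ] ℂ) : (kernelIdeal ψ : Set A) = Kset ψ :=
  TwoSidedIdeal.coe_mk' ..

lemma isClosed_Kset (ψ : A →L[ℂ] ℂ) : IsClosed (Kset ψ) := by
  simp only [Kset, Set.ofPred_forall]
  exact isClosed_iInter fun u ↦ isClosed_iInter fun v ↦
    isClosed_eq (by fun_prop) continuous_const

lemma IsPositiveFunctional.apply_star_mul_self_eq_zero_of_mem_Kset {ψ : A →L[ℂ] ℂ}
    (hψ : IsPositiveFunctional ψ) {a : A} (ha : a ∈ Kset ψ) : ψ (star a * a) = 0 := by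
  rw [← coe_kernelIdeal] at ha
  have hmem : star a * a ∈ (kernelIdeal ψ : Set A) := (kernelIdeal ψ).mul_mem_left _ _ ha
  rw [coe_kernelIdeal] at hmem
  exact hψ.apply_eq_zero_of_mem_Kset hmem

lemma subset_Kset {L : TwoSidedIdeal A} {ψ : A →L[ℂ] ℂ} (hψ : ∀ l ∈ L, ψ l = 0) :
    (L : Set A) ⊆ Kset ψ :=
  fun _ hl _ _ ↦ hψ _ (L.mul_mem_right _ _ (L.mul_mem_left _ _ hl))

/-- Dominance of the ideal `J` relative to the subalgebra `B`. -/
def IsDominantRel (B : NonUnitalStarSubalgebra ℂ A) (J : TwoSidedIdeal A) : Prop :=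
  ∀ L : TwoSidedIdeal A, IsClosed (L : Set A) → (L : Set A) ≠ Set.univ →
    (B : Set A) ∩ (L : Set A) ⊆ (B : Set A) ∩ (J : Set A) → (L : Set A) ⊆ (J : Set A)

variable {B : NonUnitalStarSubalgebra ℂ A} {J L : TwoSidedIdeal A} {Φ : Set (B →L[ℂ] ℂ)}
  {σ : (B →L[ℂ] ℂ) → (A →L[ℂ] ℂ)}

/-- An `A`-lift of the set `Φ`, encoded as a function on all functionals of `B` whose values
outside `Φ` are irrelevant. -/
def IsLift (Φ : Set (B →L[ℂ] ℂ)) (σ : (B →L[ℂ] ℂ) → (A →L[ℂ] ℂ)) : Prop :=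
  ∀ φ ∈ Φ, IsState (σ φ) ∧ ∀ b : B, σ φ b = φ b

/-- A pure `A`-lift of `Φ`, encoded as in `IsLift`. -/
def IsPureLift (Φ : Set (B →L[ℂ] ℂ)) (σ : (B →L[ℂ] ℂ) → (A →L[ℂ] ℂ)) : Prop :=
  ∀ φ ∈ Φ, IsPureState (σ φ) ∧ ∀ b : B, σ φ b = φ b

lemma IsPureLift.isLift (hσ : IsPureLift Φ σ) : IsLift Φ σ :=
  fun φ hφ ↦ ⟨(hσ φ hφ).1.1, (hσ φ hφ).2⟩

/-- Subordination to `J` of the family `σ φ`, `φ ∈ Φ`. -/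
def IsSubordinate (Φ : Set (B →L[ℂ] ℂ)) (σ : (B →L[ℂ] ℂ) → (A →L[ℂ] ℂ)) (J : TwoSidedIdeal A) :
    Prop :=
  ⋂ φ ∈ Φ, Kset (σ φ) ⊆ (J : Set A)

/-- The pure states of `B` vanishing on `B ∩ J`, the family that detects dominance of `J`. -/
def pureStatesVanishing (B : NonUnitalStarSubalgebra ℂ A) (J : TwoSidedIdeal A) :
    Set (B →L[ℂ] ℂ) :=
  {φ | IsPureState φ ∧ ∀ b : B, (b : A) ∈ J → φ b = 0}

lemma exists_mem_pureStatesVanishing (hB : IsClosed (B : Set A)) (hJ : IsClosed (J : Set A))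
    {b : B} (hb : (b : A) ∉ J) : ∃ φ ∈ pureStatesVanishing B J, φ (star b * b) ≠ 0 := by
  have := hB
  let I : TwoSidedIdeal B := J.comap (NonUnitalStarSubalgebraClass.subtype B)
  have hmem (l : B) : l ∈ I ↔ (l : A) ∈ J := TwoSidedIdeal.mem_comap _
  have hI : IsClosed (I : Set B) := by
    rw [show (I : Set B) = Subtype.val ⁻¹' (J : Set A) from Set.ext hmem]
    exact hJ.preimage continuous_subtype_val
  obtain ⟨φ, hφ, hφI, hφb⟩ :=
    exists_isPureState_vanishing_apply_star_mul_self_ne_zero hI (mt (hmem b).mp hb)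
  exact ⟨φ, ⟨hφ, fun l hl ↦ hφI l ((hmem l).mpr hl)⟩, hφb⟩

lemma IsLift.inter_iInter_Kset_subset (hB : IsClosed (B : Set A)) (hJ : IsClosed (J : Set A))
    (hσ : IsLift (pureStatesVanishing B J) σ) :
    (B : Set A) ∩ ⋂ φ ∈ pureStatesVanishing B J, Kset (σ φ) ⊆ (B : Set A) ∩ J := by
  rintro b ⟨hb, hbK⟩
  refine ⟨hb, by_contra fun hbJ ↦ ?_⟩
  obtain ⟨φ, hφ, hφb⟩ := exists_mem_pureStatesVanishing hB hJ (b := ⟨b, hb⟩) hbJ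
  refine hφb ?_
  rw [← (hσ φ hφ).2]
  exact (hσ φ hφ).1.isPositiveFunctional.apply_star_mul_self_eq_zero_of_mem_Kset
    (Set.mem_iInter₂.mp hbK φ hφ)

lemma IsDominantRel.isSubordinate (hJdom : IsDominantRel B J) (hB : IsClosed (B : Set A))
    (hJ : IsClosed (J : Set A)) (hBJ : ¬ (B : Set A) ⊆ J)
    (hσ : IsLift (pureStatesVanishing B J) σ) : IsSubordinate (pureStatesVanishing B J) σ J := by
  have hcoe : ((⨅ φ : pureStatesVanishing B J, kernelIdeal (σ φ) : TwoSidedIdeal A) : Set A) =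
      ⋂ φ ∈ pureStatesVanishing B J, Kset (σ φ) := by
    ext a
    simp only [SetLike.mem_coe, TwoSidedIdeal.mem_iInf, Subtype.forall, Set.mem_iInter,
      ← coe_kernelIdeal]
  have hinter := hσ.inter_iInter_Kset_subset hB hJ
  rw [IsSubordinate, ← hcoe]
  rw [← hcoe] at hinter
  refine hJdom _ ?_ (fun huniv ↦ hBJ ?_) hinter
  · rw [hcoe]
    exact isClosed_biInter fun φ _ ↦ isClosed_Kset (σ φ)
  · rw [huniv, Set.inter_univ] at hinter
    exact hinter.trans Set.inter_subset_right

lemma exists_isLift_subset_iInter_Kset (hB : IsClosed (B : Set A)) (hL : IsClosed (L : Set A))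
    (hΦ : ∀ φ ∈ Φ, IsState φ ∧ ∀ b : B, (b : A) ∈ L → φ b = 0) :
    ∃ σ, IsLift Φ σ ∧ (L : Set A) ⊆ ⋂ φ ∈ Φ, Kset (σ φ) := by
  have := hB
  choose! σ hσ hσφ hσL using fun φ hφ ↦
    exists_isState_extension_vanishing hL (hΦ φ hφ).1 (hΦ φ hφ).2
  exact ⟨σ, fun φ hφ ↦ ⟨hσ φ hφ, hσφ φ hφ⟩, Set.subset_iInter₂ fun φ hφ ↦ subset_Kset (hσL φ hφ)⟩

lemma exists_isPureLift_subset_iInter_Kset (hB : IsClosed (B : Set A))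
    (hL : IsClosed (L : Set A)) (hΦ : ∀ φ ∈ Φ, IsPureState φ ∧ ∀ b : B, (b : A) ∈ L → φ b = 0) :
    ∃ σ, IsPureLift Φ σ ∧ (L : Set A) ⊆ ⋂ φ ∈ Φ, Kset (σ φ) := by
  have := hB
  choose! σ hσ hσφ hσL using fun φ hφ ↦
    exists_isPureState_extension_vanishing hL (hΦ φ hφ).1 (hΦ φ hφ).2
  exact ⟨σ, fun φ hφ ↦ ⟨hσ φ hφ, hσφ φ hφ⟩, Set.subset_iInter₂ fun φ hφ ↦ subset_Kset (hσL φ hφ)⟩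

lemma NondegSet.not_subset {S : Set A} (hS : NondegSet S) (hJ : IsClosed (J : Set A))
    (hJ_ne : (J : Set A) ≠ Set.univ) : ¬ S ⊆ J := by
  intro hSJ
  have hspan : Submodule.span ℂ {x : A | ∃ b ∈ S, ∃ a, x = b * a} ≤
      ClosedIdeal.toSubmodule hJ := by
    rw [Submodule.span_le]
    rintro _ ⟨b, hb, a, rfl⟩
    exact J.mul_mem_right b a (hSJ hb)
  have hclosure := closure_minimal (SetLike.coe_subset_coe.mpr hspan) hJ
  rw [hS] at hclosure
  exact hJ_ne (Set.univ_subset_iff.mp hclosure)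

end Dominance

end

theorem stmt4_general {A : Type*} [NonUnitalCStarAlgebra A]
    (B : NonUnitalStarSubalgebra ℂ A) (hB : IsClosed (B : Set A))
    (J : TwoSidedIdeal A) (hJ : IsClosed (J : Set A)) (hBJ : ¬ (B : Set A) ⊆ J) :
    List.TFAE [
      IsDominantRel B J,
      ∃ Φ : Set (B →L[ℂ] ℂ), (∀ φ ∈ Φ, IsState φ ∧ ∀ b : B, (b : A) ∈ J → φ b = 0) ∧
        ∀ σ, IsLift Φ σ → IsSubordinate Φ σ J,
      ∃ Φ : Set (B →L[ℂ] ℂ), (∀ φ ∈ Φ, IsPureState φ ∧ ∀ b : B, (b : A) ∈ J → φ b = 0) ∧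
        ∀ σ, IsLift Φ σ → IsSubordinate Φ σ J,
      ∃ Φ : Set (B →L[ℂ] ℂ), (∀ φ ∈ Φ, IsPureState φ ∧ ∀ b : B, (b : A) ∈ J → φ b = 0) ∧
        ∀ σ, IsPureLift Φ σ → IsSubordinate Φ σ J] := by
  tfae_have 1 → 3 := fun hJdom ↦
    ⟨pureStatesVanishing B J, fun _ ↦ id, fun _ ↦ hJdom.isSubordinate hB hJ hBJ⟩
  tfae_have 3 → 2 := fun ⟨Φ, hΦ, hsub⟩ ↦ ⟨Φ, fun φ hφ ↦ ⟨(hΦ φ hφ).1.1, (hΦ φ hφ).2⟩, hsub⟩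
  tfae_have 3 → 4 := fun ⟨Φ, hΦ, hsub⟩ ↦ ⟨Φ, hΦ, fun σ hσ ↦ hsub σ hσ.isLift⟩
  tfae_have 2 → 1 := fun ⟨Φ, hΦ, hsub⟩ L hL _ hBL ↦ by
    obtain ⟨σ, hσ, hLσ⟩ := exists_isLift_subset_iInter_Kset hB hL fun φ hφ ↦
      ⟨(hΦ φ hφ).1, fun b hb ↦ (hΦ φ hφ).2 b (hBL ⟨b.2, hb⟩).2⟩
    exact hLσ.trans (hsub σ hσ)
  tfae_have 4 → 1 := fun ⟨Φ, hΦ, hsub⟩ L hL _ hBL ↦ by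
    obtain ⟨σ, hσ, hLσ⟩ := exists_isPureLift_subset_iInter_Kset hB hL fun φ hφ ↦
      ⟨(hΦ φ hφ).1, fun b hb ↦ (hΦ φ hφ).2 b (hBL ⟨b.2, hb⟩).2⟩
    exact hLσ.trans (hsub σ hσ)
  tfae_finish

/-- **Relative Dominance Theorem.** For a non-degenerate `C*`-inclusion `B ⊆ A`
and a proper closed two-sided ideal `J ⊴ A`, the following are equivalent:
(i) `J` is dominant relative to `B`;
(ii) some set `Φ` of states of `B` vanishing on `B ∩ J` has all its `A`-lifts subordinated to `J`;
(iii) the same with `Φ` consisting of pure states;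
(iii') the same with `Φ` pure, quantifying only over pure `A`-lifts. -/
theorem stmt4 {A : Type*} [NonUnitalCStarAlgebra A]
    (B : NonUnitalStarSubalgebra ℂ A) (hBclosed : IsClosed (B : Set A))
    (hnd : NondegSet (B : Set A))
    (J : TwoSidedIdeal A) (hJclosed : IsClosed (J : Set A)) (hJproper : (J : Set A) ≠ Set.univ) :
    ((∀ L : TwoSidedIdeal A, IsClosed (L : Set A) → (L : Set A) ≠ Set.univ →
        (B : Set A) ∩ (L : Set A) ⊆ (B : Set A) ∩ (J : Set A) → (L : Set A) ⊆ (J : Set A)) ↔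
      (∃ Φ : Set (↥B →L[ℂ] ℂ),
        (∀ φ ∈ Φ, IsState φ ∧ ∀ b : ↥B, (b : A) ∈ J → φ b = 0) ∧
        ∀ σ : (↥B →L[ℂ] ℂ) → (A →L[ℂ] ℂ),
          (∀ φ ∈ Φ, IsState (σ φ) ∧ ∀ b : ↥B, σ φ (b : A) = φ b) →
          (⋂ φ ∈ Φ, Kset ⇑(σ φ)) ⊆ (J : Set A))) ∧
    ((∀ L : TwoSidedIdeal A, IsClosed (L : Set A) → (L : Set A) ≠ Set.univ →
        (B : Set A) ∩ (L : Set A) ⊆ (B : Set A) ∩ (J : Set A) → (L : Set A) ⊆ (J : Set A)) ↔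
      (∃ Φ : Set (↥B →L[ℂ] ℂ),
        (∀ φ ∈ Φ, IsPureState φ ∧ ∀ b : ↥B, (b : A) ∈ J → φ b = 0) ∧
        ∀ σ : (↥B →L[ℂ] ℂ) → (A →L[ℂ] ℂ),
          (∀ φ ∈ Φ, IsState (σ φ) ∧ ∀ b : ↥B, σ φ (b : A) = φ b) →
          (⋂ φ ∈ Φ, Kset ⇑(σ φ)) ⊆ (J : Set A))) ∧
    ((∀ L : TwoSidedIdeal A, IsClosed (L : Set A) → (L : Set A) ≠ Set.univ →
        (B : Set A) ∩ (L : Set A) ⊆ (B : Set A) ∩ (J : Set A) → (L : Set A) ⊆ (J : Set A)) ↔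
      (∃ Φ : Set (↥B →L[ℂ] ℂ),
        (∀ φ ∈ Φ, IsPureState φ ∧ ∀ b : ↥B, (b : A) ∈ J → φ b = 0) ∧
        ∀ σ : (↥B →L[ℂ] ℂ) → (A →L[ℂ] ℂ),
          (∀ φ ∈ Φ, IsPureState (σ φ) ∧ ∀ b : ↥B, σ φ (b : A) = φ b) →
          (⋂ φ ∈ Φ, Kset ⇑(σ φ)) ⊆ (J : Set A))) := by
  have h := stmt4_general B hBclosed J hJclosed (hnd.not_subset hJclosed hJproper)
  exact ⟨h.out 0 1, h.out 0 2, h.out 0 3⟩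
end

section
/- Let C₀(Q) ⊆ A be a central non-degenerate inclusion with A a separable C*-algebra, and let E : A → C₀(Q) be an essentially faithful conditional expectation. Then the set Q^E_{r-cont} = {q ∈ Q : p^unif_q(a) = p^E_q(a) for all a ∈ A} is a dense Gδ subset of Q. -/
open scoped ComplexOrder
open ZeroAtInfty

/-- The seminorm `p^E_q` from the GNS representation of the state `ev_q ∘ E`:
`p^E_q(a)² = sup { (ev_q∘E)(x* a* a x) / (ev_q∘E)(x* x) : (ev_q∘E)(x* x) > 0 }`
(with value `0` when the set is empty). -/
noncomputable def pE {Q : Type*} [TopologicalSpace Q]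
    {A : Type*} [NonUnitalCStarAlgebra A]
    (E : A →L[ℂ] C₀(Q, ℂ)) (q : Q) (a : A) : ℝ :=
  Real.sqrt (sSup {r : ℝ | ∃ x : A, 0 < (E (star x * x) q).re ∧
    r = (E (star x * (star a * a) * x) q).re / (E (star x * x) q).re})

/-- `p^unif_q(a) = inf {‖f a‖ : f ∈ C₀(Q), 0 ≤ f ≤ 1, f q = 1}`, the quotient seminorm of
`A / J^unif_q`. -/
noncomputable def punif {Q : Type*} [TopologicalSpace Q] [LocallyCompactSpace Q] [T2Space Q]
    {A : Type*} [NonUnitalCStarAlgebra A]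
    (ι : C₀(Q, ℂ) →⋆ₙₐ[ℂ] A) (q : Q) (a : A) : ℝ :=
  sInf {r : ℝ | ∃ f : C₀(Q, ℂ), (∀ x : Q, 0 ≤ f x ∧ f x ≤ 1) ∧ f q = 1 ∧ r = ‖ι f * a‖}

/-!
By definition `pE E q a` is the norm of `a` in the GNS representation `π_q` of `ev_q ∘ E`. The
common kernel of the `π_q` is a closed ideal inside `ker E`, so essential faithfulness makes
`⨁ π_q` injective, hence isometric: `‖a‖ = sup_q pE E q a`. Applied to `f * a` for a bump function
`f` around `q`, with centrality giving `pE E x (f * a) = ‖f x‖ * pE E x a`, this yields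
`punif ι q a ≤ sup_{x ∈ U} pE E x a` for every neighbourhood `U` of `q`. Hence every nonempty open
set contains points at which `punif ι · a` exceeds its minorant `pE E · a` by less than `ε`. The
former is upper semicontinuous, because a cutoff with value `1` at `q` can be perturbed to equal `1`
near `q`, and the latter is lower semicontinuous, so by the Baire category theorem they agree on a
dense `Gδ` set. It remains to intersect over a dense sequence of elements `a`, both seminorms
being continuous in `a`.
-/

open scoped ENNReal InnerProductSpace Topology

theorem isOpen_lt_of_semicontinuous {X γ : Type*} [TopologicalSpace X] [LinearOrder γ]
    [DenselyOrdered γ] {f g : X → γ} (hf : UpperSemicontinuous f) (hg : LowerSemicontinuous g) :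
    IsOpen {x | f x < g x} := by
  refine isOpen_iff_mem_nhds.2 fun x hx ↦ ?_
  obtain ⟨c, hfc, hcg⟩ := exists_between (show f x < g x from hx)
  filter_upwards [hf x c hfc, hg x c hcg] with y hfy hgy using hfy.trans hgy

theorem setOfPred_eq_eq_iInter_lt_add {X : Type*} {f g : X → ℝ} (hgf : g ≤ f) :
    {x | f x = g x} = ⋂ n : ℕ, {x | f x < g x + 1 / ((n : ℝ) + 1)} := by
  ext x
  simp only [Set.mem_ofPred_eq, Set.mem_iInter]
  refine ⟨fun h n ↦ h ▸ lt_add_of_pos_right _ (by positivity), fun h ↦ ?_⟩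
  refine le_antisymm (le_of_forall_pos_lt_add fun ε hε ↦ ?_) (hgf x)
  obtain ⟨n, hn⟩ := exists_nat_one_div_lt hε
  exact (h n).trans (by gcongr)

theorem isGδ_eq_of_semicontinuous {X : Type*} [TopologicalSpace X] {f g : X → ℝ}
    (hf : UpperSemicontinuous f) (hg : LowerSemicontinuous g) (hgf : g ≤ f) :
    IsGδ {x | f x = g x} := by
  rw [setOfPred_eq_eq_iInter_lt_add hgf]
  exact .iInter fun n ↦
    (isOpen_lt_of_semicontinuous hf (hg.add lowerSemicontinuous_const)).isGδ

theorem dense_eq_of_semicontinuous {X : Type*} [TopologicalSpace X] [BaireSpace X] {f g : X → ℝ}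
    (hf : UpperSemicontinuous f) (hg : LowerSemicontinuous g) (hgf : g ≤ f)
    (hdense : ∀ ε > 0, Dense {x | f x < g x + ε}) : Dense {x | f x = g x} := by
  rw [setOfPred_eq_eq_iInter_lt_add hgf]
  exact dense_iInter_of_isOpen
    (fun n ↦ isOpen_lt_of_semicontinuous hf (hg.add lowerSemicontinuous_const))
    fun n ↦ hdense _ (by positivity)

theorem norm_map_mul_le {A B : Type*} [NonUnitalCStarAlgebra A] [NonUnitalCStarAlgebra B]
    (π : B →⋆ₙₐ[ℂ] A) (b : B) (a : A) : ‖π b * a‖ ≤ ‖b‖ * ‖a‖ := by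
  grw [norm_mul_le, NonUnitalStarAlgHom.norm_apply_le π b]

theorem norm_le_of_forall_norm_map_le {A I : Type*} [NonUnitalCStarAlgebra A] {B : I → Type*}
    [∀ i, NonUnitalCStarAlgebra (B i)] (π : ∀ i, A →⋆ₙₐ[ℂ] B i)
    (hπ : ∀ a, (∀ i, π i a = 0) → a = 0) {a : A} {M : ℝ} (hM : 0 ≤ M)
    (h : ∀ i, ‖π i a‖ ≤ M) : ‖a‖ ≤ M := by
  have hbdd (b : A) : Memℓp (fun i ↦ π i b) ∞ :=
    memℓp_infty ⟨‖b‖, Set.forall_mem_range.2 fun i ↦ NonUnitalStarAlgHom.norm_apply_le (π i) b⟩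
  let ρ : A →⋆ₙₐ[ℂ] lp B ∞ :=
    { toFun b := ⟨fun i ↦ π i b, hbdd b⟩
      map_smul' c b := lp.ext <| funext fun i ↦ map_smul (π i) c b
      map_zero' := lp.ext <| funext fun i ↦ map_zero (π i)
      map_add' b c := lp.ext <| funext fun i ↦ map_add (π i) b c
      map_mul' b c := lp.ext <| funext fun i ↦ map_mul (π i) b c
      map_star' b := lp.ext <| funext fun i ↦ map_star (π i) b }
  have hρ : Function.Injective ρ := (injective_iff_map_eq_zero ρ).2 fun b hb ↦
    hπ b fun i ↦ congr_fun (congr_arg Subtype.val hb) i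
  rw [← NonUnitalStarAlgHom.norm_map ρ hρ a]
  exact lp.norm_le_of_forall_le hM h

section GNS

variable {A : Type*} [NonUnitalCStarAlgebra A] [PartialOrder A] [StarOrderedRing A]
  (φ : A →ₚ[ℂ] ℂ)

theorem inner_gns_apply_coe (a x y : A) :
    ⟪(φ.toPreGNS x : φ.GNS), φ.gnsNonUnitalStarAlgHom a (φ.toPreGNS y)⟫_ℂ =
      φ (star x * a * y) := by
  simp [φ.preGNS_inner_def, mul_assoc]

theorem norm_toPreGNS_sq (x : A) : ‖φ.toPreGNS x‖ ^ 2 = (φ (star x * x)).re := by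
  rw [← φ.ofPreGNS_toPreGNS x, ← φ.preGNS_norm_sq, ← Complex.ofReal_pow, Complex.ofReal_re]
  rfl

theorem norm_gns_apply_coe_sq (a x : A) :
    ‖φ.gnsNonUnitalStarAlgHom a (φ.toPreGNS x)‖ ^ 2 = (φ (star x * (star a * a) * x)).re := by
  simp [norm_toPreGNS_sq, mul_assoc]

theorem norm_gns_le_iff {a : A} {M : ℝ} (hM : 0 ≤ M) :
    ‖φ.gnsNonUnitalStarAlgHom a‖ ≤ M ↔
      ∀ x, (φ (star x * (star a * a) * x)).re ≤ M ^ 2 * (φ (star x * x)).re := by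
  have hsq (x : A) : ‖φ.gnsNonUnitalStarAlgHom a (φ.toPreGNS x)‖ ≤ M * ‖φ.toPreGNS x‖ ↔
      (φ (star x * (star a * a) * x)).re ≤ M ^ 2 * (φ (star x * x)).re := by
    rw [← sq_le_sq₀ (norm_nonneg _) (by positivity), mul_pow, norm_gns_apply_coe_sq,
      norm_toPreGNS_sq]
  simp only [← hsq, ContinuousLinearMap.opNorm_le_iff hM]
  refine ⟨fun h x ↦ ?_, fun h ξ ↦ ?_⟩
  · simpa only [UniformSpace.Completion.norm_coe] using h (φ.toPreGNS x)
  · induction ξ using UniformSpace.Completion.induction_on with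
    | hp => exact isClosed_le (by fun_prop) (by fun_prop)
    | ih x =>
      obtain ⟨x, rfl⟩ := φ.toPreGNS.surjective x
      simpa only [UniformSpace.Completion.norm_coe] using h x

theorem norm_gns_eq_sqrt_sSup (a : A) :
    ‖φ.gnsNonUnitalStarAlgHom a‖ = √(sSup {r : ℝ | ∃ x : A, 0 < (φ (star x * x)).re ∧
      r = (φ (star x * (star a * a) * x)).re / (φ (star x * x)).re}) := by
  set S := {r : ℝ | ∃ x : A, 0 < (φ (star x * x)).re ∧
      r = (φ (star x * (star a * a) * x)).re / (φ (star x * x)).re}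
  have hle := (norm_gns_le_iff φ (norm_nonneg (φ.gnsNonUnitalStarAlgHom a))).1 le_rfl
  have hS : ∀ r ∈ S, r ≤ ‖φ.gnsNonUnitalStarAlgHom a‖ ^ 2 := by
    rintro _ ⟨x, hx, rfl⟩
    exact (div_le_iff₀ hx).2 (hle x)
  have hS₀ : 0 ≤ sSup S := by
    refine Real.sSup_nonneg ?_
    rintro _ ⟨x, hx, rfl⟩
    rw [← norm_gns_apply_coe_sq]
    positivity
  refine le_antisymm ((norm_gns_le_iff φ (Real.sqrt_nonneg _)).2 fun x ↦ ?_)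
    ((Real.sqrt_le_left (norm_nonneg _)).2 (Real.sSup_le hS (by positivity)))
  have hx₀ : 0 ≤ (φ (star x * x)).re := norm_toPreGNS_sq φ x ▸ sq_nonneg _
  obtain hx | hx := hx₀.eq_or_lt
  · simpa [← hx] using hle x
  · rw [Real.sq_sqrt hS₀, ← div_le_iff₀ hx]
    exact le_csSup ⟨_, hS⟩ ⟨x, hx, rfl⟩

variable {φ} in
theorem gns_operator_ext {S T : φ.GNS →L[ℂ] φ.GNS}
    (h : ∀ x y : A, ⟪(φ.toPreGNS x : φ.GNS), S (φ.toPreGNS y)⟫_ℂ =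
      ⟪(φ.toPreGNS x : φ.GNS), T (φ.toPreGNS y)⟫_ℂ) : S = T := by
  refine ContinuousLinearMap.ext fun ξ ↦ ext_inner_left ℂ fun η ↦ ?_
  induction η, ξ using UniformSpace.Completion.induction_on₂ with
  | hp => exact isClosed_eq (by fun_prop) (by fun_prop)
  | ih x y => exact h (φ.ofPreGNS x) (φ.ofPreGNS y)

theorem gns_mul_eq_smul_of_central {c : A} {z : ℂ} (hc : ∀ b, c * b = b * c)
    (hφ : ∀ b, φ (c * b) = z * φ b) (a : A) :
    φ.gnsNonUnitalStarAlgHom (c * a) = z • φ.gnsNonUnitalStarAlgHom a := by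
  refine gns_operator_ext fun x y ↦ ?_
  rw [smul_apply, inner_smul_right, inner_gns_apply_coe, inner_gns_apply_coe, ← hφ]
  simp only [← mul_assoc, hc (star x)]

end GNS

section Bump

variable {Q : Type*} [TopologicalSpace Q]

theorem exists_zeroAtInfty_one_of_mem_nhds [LocallyCompactSpace Q] [R1Space Q] {q : Q} {U : Set Q}
    (hU : U ∈ 𝓝 q) :
    ∃ f : C₀(Q, ℂ), (∀ x, 0 ≤ f x ∧ f x ≤ 1) ∧ f q = 1 ∧ ∀ x ∉ U, f x = 0 := by
  obtain ⟨k, hkq, hkc, hkU, hk⟩ := exists_continuousMap_one_of_isCompact_subset_isOpen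
    isCompact_singleton isOpen_interior
    (Set.singleton_subset_iff.2 (mem_interior_iff_mem_nhds.2 hU))
  have hsupp : HasCompactSupport fun x ↦ (k x : ℂ) :=
    HasCompactSupport.comp_left (g := Complex.ofReal) hkc Complex.ofReal_zero
  refine ⟨⟨⟨fun x ↦ (k x : ℂ), by fun_prop⟩, hsupp.is_zero_at_infty⟩, fun x ↦ ?_, ?_,
    fun x hx ↦ ?_⟩
  · exact ⟨Complex.zero_le_real.2 (hk x).1, Complex.real_le_real.2 (hk x).2⟩
  · exact congr_arg Complex.ofReal (hkq rfl)
  · have : k x = 0 := image_eq_zero_of_notMem_tsupport fun h ↦ hx (interior_subset (hkU h))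
    exact congr_arg Complex.ofReal this

theorem norm_le_one_of_forall_nonneg_le_one {f : C₀(Q, ℂ)} (hf : ∀ x, 0 ≤ f x ∧ f x ≤ 1) :
    ‖f‖ ≤ 1 := by
  rw [← ZeroAtInftyContinuousMap.norm_toBCF_eq_norm]
  exact (BoundedContinuousFunction.norm_le zero_le_one).2 fun x ↦
    (CStarAlgebra.norm_le_one_iff_of_nonneg (f x) (hf x).1).2 (hf x).2

theorem abs_min_one_mul_sub_le {t δ : ℝ} (ht₀ : 0 ≤ t) (ht₁ : t ≤ 1) (hδ : 0 ≤ δ) :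
    |min 1 ((1 + δ) * t) - t| ≤ δ := by
  have hle : t ≤ min 1 ((1 + δ) * t) := le_min ht₁ (by nlinarith)
  rw [abs_of_nonneg (sub_nonneg.2 hle), sub_le_iff_le_add]
  exact (min_le_right _ _).trans (by nlinarith)

theorem exists_eventually_eq_one_norm_sub_le {f : C₀(Q, ℂ)} {q : Q}
    (hf : ∀ x, 0 ≤ f x ∧ f x ≤ 1) (hfq : f q = 1) {δ : ℝ} (hδ : 0 < δ) :
    ∃ g : C₀(Q, ℂ), (∀ x, 0 ≤ g x ∧ g x ≤ 1) ∧ (∀ᶠ x in 𝓝 q, g x = 1) ∧ ‖g - f‖ ≤ δ := by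
  let trunc (z : ℂ) : ℂ := (min 1 ((1 + δ) * z.re) : ℝ)
  have htrunc : Continuous trunc := by fun_prop
  have htrunc₀ : trunc 0 = 0 := by simp [trunc]
  have hre (x : Q) : f x = ((f x).re : ℂ) :=
    Complex.eq_re_of_ofReal_le (r := 0) (by simpa using (hf x).1)
  have hf₀ (x : Q) : 0 ≤ (f x).re := (Complex.le_def.1 (hf x).1).1
  have hf₁ (x : Q) : (f x).re ≤ 1 := (Complex.le_def.1 (hf x).2).1
  refine ⟨⟨⟨fun x ↦ trunc (f x), htrunc.comp f.continuous⟩,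
    (htrunc.tendsto' 0 0 htrunc₀).comp f.zero_at_infty'⟩, fun x ↦ ?_, ?_, ?_⟩
  · refine ⟨Complex.zero_le_real.2 (le_min zero_le_one ?_),
      Complex.real_le_real.2 (min_le_left _ _)⟩
    have := hf₀ x
    positivity
  · have hlim : ∀ᶠ x in 𝓝 q, 1 < (1 + δ) * (f x).re :=
      (isOpen_lt continuous_const (by fun_prop)).mem_nhds (by simpa [hfq])
    filter_upwards [hlim] with x hx
    simp [trunc, min_eq_left hx.le]
  · rw [← ZeroAtInftyContinuousMap.norm_toBCF_eq_norm]
    refine (BoundedContinuousFunction.norm_le hδ.le).2 fun x ↦ ?_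
    change ‖trunc (f x) - f x‖ ≤ δ
    rw [hre x, ← Complex.ofReal_sub, Complex.norm_real, Real.norm_eq_abs, Complex.ofReal_re]
    exact abs_min_one_mul_sub_le (hf₀ x) (hf₁ x) hδ.le

end Bump

section Unif

variable {Q : Type*} [TopologicalSpace Q] [LocallyCompactSpace Q] [T2Space Q]
  {A : Type*} [NonUnitalCStarAlgebra A] (ι : C₀(Q, ℂ) →⋆ₙₐ[ℂ] A)

theorem punif_le_norm_iota_mul {f : C₀(Q, ℂ)} {q : Q} (hf : ∀ x, 0 ≤ f x ∧ f x ≤ 1)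
    (hfq : f q = 1) (a : A) : punif ι q a ≤ ‖ι f * a‖ := by
  refine csInf_le ⟨0, ?_⟩ ⟨f, hf, hfq, rfl⟩
  rintro _ ⟨g, -, -, rfl⟩
  exact norm_nonneg _

theorem le_punif {q : Q} {a : A} {r : ℝ}
    (h : ∀ f : C₀(Q, ℂ), (∀ x, 0 ≤ f x ∧ f x ≤ 1) → f q = 1 → r ≤ ‖ι f * a‖) :
    r ≤ punif ι q a := by
  obtain ⟨g, hg, hgq, -⟩ := exists_zeroAtInfty_one_of_mem_nhds (Filter.univ_mem (f := 𝓝 q))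
  refine le_csInf ⟨_, g, hg, hgq, rfl⟩ ?_
  rintro _ ⟨f, hf, hfq, rfl⟩
  exact h f hf hfq

theorem continuous_punif (q : Q) : Continuous (punif ι q) := by
  refine (LipschitzWith.of_le_add fun a b ↦ ?_).continuous
  rw [← sub_le_iff_le_add]
  refine le_punif ι fun f hf hfq ↦ sub_le_iff_le_add.2 ?_
  calc punif ι q a ≤ ‖ι f * a‖ := punif_le_norm_iota_mul ι hf hfq a
    _ = ‖ι f * b + ι f * (a - b)‖ := by rw [← mul_add, add_sub_cancel]
    _ ≤ ‖ι f * b‖ + ‖f‖ * ‖a - b‖ := by grw [norm_add_le, norm_map_mul_le ι f (a - b)]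
    _ ≤ ‖ι f * b‖ + dist a b := by
      grw [norm_le_one_of_forall_nonneg_le_one hf, one_mul, dist_eq_norm]

theorem upperSemicontinuous_punif (a : A) : UpperSemicontinuous fun q ↦ punif ι q a := by
  intro q y hy
  obtain ⟨f, hf, hfq, hfy⟩ :
      ∃ f : C₀(Q, ℂ), (∀ x, 0 ≤ f x ∧ f x ≤ 1) ∧ f q = 1 ∧ ‖ι f * a‖ < y := by
    by_contra! h
    exact hy.not_ge (le_punif ι h)
  obtain ⟨δ, hδ, hδy⟩ := exists_pos_mul_lt (sub_pos.2 hfy) ‖a‖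
  obtain ⟨g, hg, hgq, hgf⟩ := exists_eventually_eq_one_norm_sub_le hf hfq hδ
  filter_upwards [hgq] with x hgx
  calc punif ι x a ≤ ‖ι g * a‖ := punif_le_norm_iota_mul ι hg hgx a
    _ = ‖ι f * a + ι (g - f) * a‖ := by rw [← add_mul, ← map_add, add_sub_cancel]
    _ ≤ ‖ι f * a‖ + δ * ‖a‖ := by grw [norm_add_le, norm_map_mul_le ι (g - f), hgf]
    _ < y := by linarith

end Unif

section Expectation

variable {Q : Type*} [TopologicalSpace Q] {A : Type*} [NonUnitalCStarAlgebra A]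
  {E : A →L[ℂ] C₀(Q, ℂ)} {ι : C₀(Q, ℂ) →⋆ₙₐ[ℂ] A}

theorem map_iota_mul [LocallyCompactSpace Q] [R1Space Q]
    (hEmod : ∀ (f₁ f₂ : C₀(Q, ℂ)) (a : A), E (ι f₁ * a * ι f₂) = f₁ * E a * f₂)
    (f : C₀(Q, ℂ)) (a : A) : E (ι f * a) = f * E a := by
  ext q
  obtain ⟨g, -, hgq, -⟩ := exists_zeroAtInfty_one_of_mem_nhds (Filter.univ_mem (f := 𝓝 q))
  have h : g * E (ι f * a) * g = g * f * E a * g := by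
    rw [← hEmod, ← hEmod, map_mul ι, mul_assoc (ι g) (ι f)]
  simpa [hgq] using DFunLike.congr_fun h q

/-- `E` is essentially faithful: its kernel contains no nonzero closed two-sided ideal. -/
def IsEssentiallyFaithful (E : A →L[ℂ] C₀(Q, ℂ)) : Prop :=
  ∀ L : TwoSidedIdeal A, IsClosed (L : Set A) → (∀ x ∈ L, E x = 0) → (L : Set A) = {0}

variable [PartialOrder A] [StarOrderedRing A]

/-- The positive functional `ev_q ∘ E`. -/
noncomputable def evalFunctional (E : A →L[ℂ] C₀(Q, ℂ))
    (hEpos : ∀ a : A, 0 ≤ a → ∀ q : Q, 0 ≤ E a q) (q : Q) : A →ₚ[ℂ] ℂ :=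
  .mk₀
    { toFun a := E a q
      map_add' a b := by simp
      map_smul' c a := by simp }
    fun a ha ↦ hEpos a ha q

/-- The GNS representation of the functional `ev_q ∘ E`; its operator norm is `p^E_q`. -/
noncomputable def gnsRep (E : A →L[ℂ] C₀(Q, ℂ))
    (hEpos : ∀ a : A, 0 ≤ a → ∀ q : Q, 0 ≤ E a q) (q : Q) :
    A →⋆ₙₐ[ℂ] ((evalFunctional E hEpos q).GNS →L[ℂ] (evalFunctional E hEpos q).GNS) :=
  (evalFunctional E hEpos q).gnsNonUnitalStarAlgHom

variable (hEpos : ∀ a : A, 0 ≤ a → ∀ q : Q, 0 ≤ E a q)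
include hEpos

theorem pE_eq_norm_gnsRep (q : Q) (a : A) : pE E q a = ‖gnsRep E hEpos q a‖ :=
  (norm_gns_eq_sqrt_sSup (evalFunctional E hEpos q) a).symm

theorem pE_le_norm (q : Q) (a : A) : pE E q a ≤ ‖a‖ :=
  pE_eq_norm_gnsRep hEpos q a ▸ NonUnitalStarAlgHom.norm_apply_le (gnsRep E hEpos q) a

theorem continuous_pE (q : Q) : Continuous (pE E q) := by
  simp only [funext (pE_eq_norm_gnsRep hEpos q)]
  exact (map_continuous (gnsRep E hEpos q)).norm

theorem pE_le_iff {q : Q} {a : A} {M : ℝ} (hM : 0 ≤ M) :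
    pE E q a ≤ M ↔
      ∀ x, (E (star x * (star a * a) * x) q).re ≤ M ^ 2 * (E (star x * x) q).re :=
  pE_eq_norm_gnsRep hEpos q a ▸ norm_gns_le_iff (evalFunctional E hEpos q) hM

theorem lowerSemicontinuous_pE (a : A) : LowerSemicontinuous fun q ↦ pE E q a := by
  refine lowerSemicontinuous_iff_isClosed_preimage.2 fun M ↦ ?_
  obtain hM | hM := lt_or_ge M 0
  · convert isClosed_empty
    exact Set.eq_empty_of_forall_notMem fun q hq ↦ (hM.trans_le (Real.sqrt_nonneg _)).not_ge hq
  · simp only [Set.preimage, Set.mem_Iic, pE_le_iff hEpos hM, Set.ofPred_forall]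
    exact isClosed_iInter fun x ↦ isClosed_le (by fun_prop) (by fun_prop)

variable [LocallyCompactSpace Q] [T2Space Q]

theorem setOfPred_forall_punif_eq_pE_eq_iInter_denseSeq [TopologicalSpace.SeparableSpace A] :
    {q | ∀ a, punif ι q a = pE E q a} =
      ⋂ n, {q | punif ι q (TopologicalSpace.denseSeq A n) =
        pE E q (TopologicalSpace.denseSeq A n)} := by
  ext q
  simp only [Set.mem_ofPred_eq, Set.mem_iInter]
  refine ⟨fun h n ↦ h _, fun h ↦ congr_fun ?_⟩
  exact (TopologicalSpace.denseRange_denseSeq A).equalizer (continuous_punif ι q)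
    (continuous_pE hEpos q) (funext h)

variable (hEmod : ∀ (f₁ f₂ : C₀(Q, ℂ)) (a : A), E (ι f₁ * a * ι f₂) = f₁ * E a * f₂)
include hEmod

theorem apply_eq_zero_of_gnsRep_eq_zero {q : Q} {a : A} (ha : gnsRep E hEpos q a = 0) :
    E a q = 0 := by
  obtain ⟨g, -, hgq, -⟩ := exists_zeroAtInfty_one_of_mem_nhds (Filter.univ_mem (f := 𝓝 q))
  have h : E (star (ι g) * a * ι g) q = 0 := by
    refine (inner_gns_apply_coe (evalFunctional E hEpos q) a (ι g) (ι g)).symm.trans ?_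
    rw [show (evalFunctional E hEpos q).gnsNonUnitalStarAlgHom a = 0 from ha, zero_apply,
      inner_zero_right]
  rw [← map_star, hEmod] at h
  simpa [hgq] using h

theorem eq_zero_of_forall_gnsRep_eq_zero (hE : IsEssentiallyFaithful E) {a : A}
    (ha : ∀ q, gnsRep E hEpos q a = 0) : a = 0 := by
  let L : TwoSidedIdeal A := ⨅ q, TwoSidedIdeal.ker (gnsRep E hEpos q)
  have hL (x : A) : x ∈ L ↔ ∀ q, gnsRep E hEpos q x = 0 := by
    simp only [L, TwoSidedIdeal.mem_iInf, TwoSidedIdeal.mem_ker]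
  have hclosed : IsClosed (L : Set A) := by
    have : (L : Set A) = ⋂ q, {x | gnsRep E hEpos q x = 0} := by
      ext x
      simpa using hL x
    rw [this]
    exact isClosed_iInter fun q ↦ isClosed_eq (map_continuous _) continuous_const
  have hker : ∀ x ∈ L, E x = 0 := fun x hx ↦
    DFunLike.ext _ _ fun q ↦ apply_eq_zero_of_gnsRep_eq_zero hEpos hEmod ((hL x).1 hx q)
  exact (hE L hclosed hker).subset ((hL a).2 ha)

theorem norm_le_of_forall_pE_le (hE : IsEssentiallyFaithful E) {a : A} {M : ℝ} (hM : 0 ≤ M)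
    (h : ∀ q, pE E q a ≤ M) : ‖a‖ ≤ M :=
  norm_le_of_forall_norm_map_le (gnsRep E hEpos)
    (fun _ ↦ eq_zero_of_forall_gnsRep_eq_zero hEpos hEmod hE) hM
    fun q ↦ pE_eq_norm_gnsRep hEpos q a ▸ h q

variable (hcentral : ∀ (f : C₀(Q, ℂ)) (a : A), ι f * a = a * ι f)
include hcentral

theorem gnsRep_iota_mul (q : Q) (f : C₀(Q, ℂ)) (a : A) :
    gnsRep E hEpos q (ι f * a) = f q • gnsRep E hEpos q a :=
  gns_mul_eq_smul_of_central _ (hcentral f)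
    (fun b ↦ DFunLike.congr_fun (map_iota_mul hEmod f b) q) a

theorem pE_iota_mul (q : Q) (f : C₀(Q, ℂ)) (a : A) :
    pE E q (ι f * a) = ‖f q‖ * pE E q a := by
  rw [pE_eq_norm_gnsRep hEpos, pE_eq_norm_gnsRep hEpos, gnsRep_iota_mul hEpos hEmod hcentral,
    norm_smul]

theorem pE_le_punif (q : Q) (a : A) : pE E q a ≤ punif ι q a := by
  refine le_punif ι fun f _ hfq ↦ ?_
  have h : pE E q (ι f * a) = pE E q a := by simp [pE_iota_mul hEpos hEmod hcentral, hfq]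
  exact h ▸ pE_le_norm hEpos q (ι f * a)

theorem punif_le_of_forall_mem_pE_le (hE : IsEssentiallyFaithful E) {q : Q} {U : Set Q}
    (hU : U ∈ 𝓝 q) {a : A} {M : ℝ} (h : ∀ x ∈ U, pE E x a ≤ M) :
    punif ι q a ≤ M := by
  obtain ⟨f, hf, hfq, hfU⟩ := exists_zeroAtInfty_one_of_mem_nhds hU
  have hM : 0 ≤ M := (Real.sqrt_nonneg _).trans (h q (mem_of_mem_nhds hU))
  refine (punif_le_norm_iota_mul ι hf hfq a).trans <|
    norm_le_of_forall_pE_le hEpos hEmod hE hM fun x ↦ ?_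
  rw [pE_iota_mul hEpos hEmod hcentral]
  by_cases hx : x ∈ U
  · have hfx : ‖f x‖ ≤ 1 :=
      (CStarAlgebra.norm_le_one_iff_of_nonneg (f x) (hf x).1).2 (hf x).2
    exact (mul_le_of_le_one_left (Real.sqrt_nonneg _) hfx).trans (h x hx)
  · simpa [hfU x hx] using hM

theorem dense_punif_lt_pE_add (hE : IsEssentiallyFaithful E) (a : A) {ε : ℝ} (hε : 0 < ε) :
    Dense {q | punif ι q a < pE E q a + ε} := by
  refine dense_iff_inter_open.2 fun V hV hVne ↦ ?_
  have hbdd : BddAbove ((fun q ↦ pE E q a) '' V) :=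
    ⟨‖a‖, Set.forall_mem_image.2 fun q _ ↦ pE_le_norm hEpos q a⟩
  obtain ⟨_, ⟨q, hqV, rfl⟩, hq⟩ :=
    exists_lt_of_lt_csSup (hVne.image fun q ↦ pE E q a) (sub_lt_self _ hε)
  refine ⟨q, hqV, (punif_le_of_forall_mem_pE_le hEpos hEmod hcentral hE
    (hV.mem_nhds hqV) fun x hx ↦ ?_).trans_lt (sub_lt_iff_lt_add.1 hq)⟩
  exact le_csSup hbdd (Set.mem_image_of_mem _ hx)

end Expectation

theorem stmt13_general {Q : Type*} [TopologicalSpace Q] [LocallyCompactSpace Q] [T2Space Q]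
    {A : Type*} [NonUnitalCStarAlgebra A] [PartialOrder A] [StarOrderedRing A]
    [TopologicalSpace.SeparableSpace A]
    (ι : C₀(Q, ℂ) →⋆ₙₐ[ℂ] A)
    (hcentral : ∀ (f : C₀(Q, ℂ)) (a : A), ι f * a = a * ι f)
    (E : A →L[ℂ] C₀(Q, ℂ))
    (hEmod : ∀ (f₁ f₂ : C₀(Q, ℂ)) (a : A), E (ι f₁ * a * ι f₂) = f₁ * E a * f₂)
    (hEpos : ∀ a : A, 0 ≤ a → ∀ q : Q, 0 ≤ E a q) (hE : IsEssentiallyFaithful E) :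
    Dense {q : Q | ∀ a : A, punif ι q a = pE E q a} ∧
    IsGδ {q : Q | ∀ a : A, punif ι q a = pE E q a} := by
  have hle (a : A) : (fun q ↦ pE E q a) ≤ fun q ↦ punif ι q a :=
    fun q ↦ pE_le_punif hEpos hEmod hcentral q a
  have hGδ (a : A) : IsGδ {q | punif ι q a = pE E q a} :=
    isGδ_eq_of_semicontinuous (upperSemicontinuous_punif ι a) (lowerSemicontinuous_pE hEpos a)
      (hle a)
  have hdense (a : A) : Dense {q | punif ι q a = pE E q a} :=
    dense_eq_of_semicontinuous (upperSemicontinuous_punif ι a) (lowerSemicontinuous_pE hEpos a)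
      (hle a) fun _ ↦ dense_punif_lt_pE_add hEpos hEmod hcentral hE a
  rw [setOfPred_forall_punif_eq_pE_eq_iInter_denseSeq hEpos]
  exact ⟨dense_iInter_of_Gδ (fun n ↦ hGδ _) fun n ↦ hdense _, .iInter fun n ↦ hGδ _⟩

/-- For a central non-degenerate inclusion `C₀(Q) ⊆ A` with `A` separable
and `E : A → C₀(Q)` an essentially faithful conditional expectation, the set
`Q^E_{r-cont} = {q | p^unif_q = p^E_q on A}` is a dense `Gδ` subset of `Q`. -/
theorem stmt13 {Q : Type*} [TopologicalSpace Q] [LocallyCompactSpace Q] [T2Space Q]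
    {A : Type*} [NonUnitalCStarAlgebra A] [PartialOrder A] [StarOrderedRing A]
    [TopologicalSpace.SeparableSpace A]
    (ι : C₀(Q, ℂ) →⋆ₙₐ[ℂ] A) (hisom : Isometry ι)
    (hcentral : ∀ (f : C₀(Q, ℂ)) (a : A), ι f * a = a * ι f)
    (hnondeg : closure
      (Submodule.span ℂ {x : A | ∃ (f : C₀(Q, ℂ)) (a : A), x = ι f * a} : Set A) = Set.univ)
    (E : A →L[ℂ] C₀(Q, ℂ))
    (hEnorm : ‖E‖ = 1)
    (hEproj : ∀ f : C₀(Q, ℂ), E (ι f) = f)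
    (hEmod : ∀ (f₁ f₂ : C₀(Q, ℂ)) (a : A), E (ι f₁ * a * ι f₂) = f₁ * E a * f₂)
    (hEpos : ∀ a : A, 0 ≤ a → ∀ q : Q, 0 ≤ E a q)
    (hEessfaithful : ∀ L : TwoSidedIdeal A, IsClosed (L : Set A) →
      (∀ x ∈ L, E x = 0) → (L : Set A) = {0}) :
    Dense {q : Q | ∀ a : A, punif ι q a = pE E q a} ∧
    IsGδ {q : Q | ∀ a : A, punif ι q a = pE E q a} :=
  stmt13_general ι hcentral E hEmod hEpos hEessfaithful
end
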